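/- arXiv:2509.02823 — 3 statements merged into one kernel-verified Lean document; each statement's English description precedes it below -/
import Mathlib

section
/- Szemerédi–Trotter over characteristic-zero fields: there is an absolute constant C such that for any field K of characteristic zero, any finite set P of m points in K² and any finite set L of n lines in K², the number of incidences I(P, L) = #{(p, l) ∈ P × L : p ∈ l} is at most C(m^{2/3} n^{2/3} + m + n). -/
open scoped Classical

/-- A line in the plane `E²` is the zero set of a nontrivial affine equation. -/
def IsLine (E : Type) [Field E] (S : Set (E × E)) : Prop :=
  ∃ a b c : E, (a, b) ≠ (0, 0) ∧ S = {p : E × E | a * p.1 + b * p.2 + c = 0}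

/-- If the sets `F p` pairwise share at most one element, the total size of the `F p` exceeds the
size of their union by at most the square of the number of sets. -/
lemma sum_card_le_card_biUnion_add_sq {α β : Type*} [DecidableEq α] [DecidableEq β] (S : Finset α)
    (F : α → Finset β)
    (h : ∀ p ∈ S, ∀ q ∈ S, p ≠ q → (F p ∩ F q).card ≤ 1) :
    ∑ p ∈ S, (F p).card ≤ (S.biUnion F).card + S.card ^ 2 := by
  induction S using Finset.induction_on with
  | empty => simp
  | insert a S ha ih =>
    have ih' := ih fun p hp q hq => h p (Finset.mem_insert_of_mem hp) q (Finset.mem_insert_of_mem hq)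
    have hinter : (F a ∩ S.biUnion F).card ≤ S.card := by
      rw [Finset.inter_biUnion]
      refine Finset.card_biUnion_le.trans ?_
      refine (Finset.sum_le_card_nsmul S _ 1 fun q hq => ?_).trans (by simp)
      exact h a (Finset.mem_insert_self a S) q (Finset.mem_insert_of_mem hq)
        fun e => ha (e ▸ hq)
    have hunion := Finset.card_union_add_card_inter (F a) (S.biUnion F)
    rw [Finset.sum_insert ha, Finset.biUnion_insert, Finset.card_insert_of_notMem ha]
    nlinarith

/-- Two complex numbers in the same square of side `1/2` are at distance less than `1`. -/
lemma norm_sub_lt_one_of_floor_eq {u v : ℂ} (hre : ⌊2 * u.re⌋ = ⌊2 * v.re⌋)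
    (him : ⌊2 * u.im⌋ = ⌊2 * v.im⌋) : ‖u - v‖ < 1 := by
  have h1 := Int.abs_sub_lt_one_of_floor_eq_floor hre
  have h2 := Int.abs_sub_lt_one_of_floor_eq_floor him
  rw [abs_lt] at h1 h2
  have h3 : ‖u - v‖ ^ 2 < 1 := by
    rw [Complex.sq_norm, Complex.normSq_apply, Complex.sub_re, Complex.sub_im]
    nlinarith
  nlinarith [norm_nonneg (u - v)]

/-- The index of the half-unit square containing a point of norm at most `K`. -/
lemma floor_pair_mem {u : ℂ} {K : ℕ} (hu : ‖u‖ ≤ K) :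
    (⌊2 * u.re⌋, ⌊2 * u.im⌋) ∈
      Finset.Icc (-(2 * K : ℤ)) (2 * K) ×ˢ Finset.Icc (-(2 * K : ℤ)) (2 * K) := by
  have h1 := abs_le.1 ((Complex.abs_re_le_norm u).trans hu)
  have h2 := abs_le.1 ((Complex.abs_im_le_norm u).trans hu)
  simp only [Finset.mem_product, Finset.mem_Icc, Int.le_floor]
  refine ⟨⟨?_, ?_⟩, ?_, ?_⟩
  · push_cast; linarith
  · exact_mod_cast (Int.floor_le (2 * u.re)).trans (by linarith : 2 * u.re ≤ 2 * (K : ℝ))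
  · push_cast; linarith
  · exact_mod_cast (Int.floor_le (2 * u.im)).trans (by linarith : 2 * u.im ≤ 2 * (K : ℝ))

/-- A planar kissing bound: few points can be closer to `z` than to each other. -/
lemma card_le_of_norm_sub_lt (S : Finset ℂ) (z : ℂ)
    (h : ∀ a ∈ S, ∀ b ∈ S, a ≠ b → ‖a - z‖ < ‖a - b‖) : S.card ≤ 25 := by
  let u : ℂ → ℂ := fun a => (a - z) / ‖a - z‖
  have hu : ∀ a, ‖u a‖ ≤ (1 : ℕ) := fun a => by
    simp only [u, norm_div, Complex.norm_real, norm_norm, Nat.cast_one]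
    exact div_self_le_one _
  have hmul : ∀ a, (‖a - z‖ : ℂ) * u a = a - z := fun a => by
    by_cases ha : a - z = 0
    · simp [u, ha]
    · have : (‖a - z‖ : ℂ) ≠ 0 := by simpa using ha
      simp only [u]; field_simp
  have key : ∀ a b : ℂ, ‖a - z‖ ≤ ‖b - z‖ → ‖u b - u a‖ < 1 → ‖b - a‖ ≤ ‖b - z‖ := by
    intro a b hab hlt
    have e : b - a = ((‖b - z‖ - ‖a - z‖ : ℝ) : ℂ) * u b + (‖a - z‖ : ℂ) * (u b - u a) := by
      push_cast
      linear_combination hmul a - hmul b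
    have h1 := norm_add_le (((‖b - z‖ - ‖a - z‖ : ℝ) : ℂ) * u b) ((‖a - z‖ : ℂ) * (u b - u a))
    rw [← e, norm_mul, norm_mul, Complex.norm_real, Complex.norm_real, norm_norm,
      Real.norm_of_nonneg (sub_nonneg.2 hab)] at h1
    have h2 := hu b
    push_cast at h2
    nlinarith [norm_nonneg (a - z)]
  have := Finset.card_le_card_of_injOn (s := S)
    (t := Finset.Icc (-(2 * (1 : ℕ) : ℤ)) (2 * (1 : ℕ)) ×ˢ
      Finset.Icc (-(2 * (1 : ℕ) : ℤ)) (2 * (1 : ℕ)))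
    (fun a => (⌊2 * (u a).re⌋, ⌊2 * (u a).im⌋)) (fun a _ => floor_pair_mem (hu a)) ?_
  · simpa using this
  · intro a ha b hb hab
    simp only [Prod.mk.injEq] at hab
    by_contra hne
    have hlt := norm_sub_lt_one_of_floor_eq hab.1 hab.2
    rcases le_total ‖a - z‖ ‖b - z‖ with hle | hle
    · exact absurd (key a b hle (by rwa [norm_sub_rev])) (not_le.2 (h b hb a ha (Ne.symm hne)))
    · exact absurd (key b a hle hlt) (not_le.2 (h a ha b hb hne))

/-- If no open disc of radius `r` around a point contains more than `x` of the points, then a disc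
of radius `K * r` contains at most `(4 * K + 1) ^ 2 * x` of them. -/
lemma card_le_of_card_disc_le {ι : Type*} (T : Finset ι) (g : ι → ℂ) (c : ℂ) {r : ℝ} (hr : 0 < r)
    (K x : ℕ) (hx : ∀ i ∈ T, (T.filter fun j => ‖g j - g i‖ < r).card ≤ x)
    (hT : ∀ i ∈ T, ‖g i - c‖ ≤ K * r) : T.card ≤ x * (4 * K + 1) ^ 2 := by
  let u : ι → ℂ := fun i => (g i - c) / r
  have hrC : (r : ℂ) ≠ 0 := by exact_mod_cast hr.ne'
  have hu : ∀ i ∈ T, ‖u i‖ ≤ K := fun i hi => by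
    simp only [u, norm_div, Complex.norm_real, Real.norm_of_nonneg hr.le]
    rw [div_le_iff₀ hr]
    exact hT i hi
  have := Finset.card_le_mul_card_image_of_maps_to (s := T)
    (t := Finset.Icc (-(2 * K : ℤ)) (2 * K) ×ˢ Finset.Icc (-(2 * K : ℤ)) (2 * K))
    (f := fun i => (⌊2 * (u i).re⌋, ⌊2 * (u i).im⌋)) (fun i hi => floor_pair_mem (hu i hi)) x ?_
  · refine this.trans (le_of_eq ?_)
    rw [Finset.card_product, Int.card_Icc, sq]
    congr 2 <;> omega
  · intro b _
    rcases (T.filter fun i => (⌊2 * (u i).re⌋, ⌊2 * (u i).im⌋) = b).eq_empty_or_nonempty with h | h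
    · rw [h]; simp
    · obtain ⟨i, hi⟩ := h
      rw [Finset.mem_filter] at hi
      refine (Finset.card_le_card ?_).trans (hx i hi.1)
      intro j hj
      rw [Finset.mem_filter] at hj ⊢
      refine ⟨hj.1, ?_⟩
      have e := hj.2.trans hi.2.symm
      simp only [Prod.mk.injEq] at e
      have hlt := norm_sub_lt_one_of_floor_eq e.1 e.2
      have : u j - u i = (g j - g i) / r := by simp only [u]; ring
      rw [this, norm_div, Complex.norm_real, Real.norm_of_nonneg hr.le, div_lt_one hr] at hlt
      exact hlt

/-- The point `p` lies on the non-vertical line `y = a.1 * x + a.2`. -/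
def OnGraph {K : Type*} [Field K] (p a : K × K) : Prop := p.2 = a.1 * p.1 + a.2

/-- The lines of `L` through `p`. -/
noncomputable def linesThrough {K : Type*} [Field K] (L : Finset (K × K)) (p : K × K) :
    Finset (K × K) := L.filter fun a => OnGraph p a

lemma mem_linesThrough {K : Type*} [Field K] {L : Finset (K × K)} {p a : K × K} :
    a ∈ linesThrough L p ↔ a ∈ L ∧ OnGraph p a := by
  simp [linesThrough]

lemma OnGraph.ext_fst {K : Type*} [Field K] {p q a : K × K} (hp : OnGraph p a) (hq : OnGraph q a)
    (h : p.1 = q.1) : p = q :=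
  Prod.ext h (by rw [hp, hq, h])

lemma OnGraph.line_unique {K : Type*} [Field K] {p q a b : K × K} (hpq : p ≠ q)
    (hpa : OnGraph p a) (hqa : OnGraph q a) (hpb : OnGraph p b) (hqb : OnGraph q b) : a = b := by
  have hx : p.1 - q.1 ≠ 0 := sub_ne_zero.2 fun h => hpq (hpa.ext_fst hqa h)
  unfold OnGraph at *
  have h1 : a.1 = b.1 := mul_right_cancel₀ hx (by linear_combination hqa - hpa + hpb - hqb)
  exact Prod.ext h1 (by rw [h1] at hpa; linear_combination hpb - hpa)

lemma card_linesThrough_inter_le_one {K : Type*} [Field K] (L : Finset (K × K)) {p q : K × K}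
    (hpq : p ≠ q) : (linesThrough L p ∩ linesThrough L q).card ≤ 1 := by
  refine Finset.card_le_one.2 fun a ha b hb => ?_
  simp only [Finset.mem_inter, mem_linesThrough] at ha hb
  exact OnGraph.line_unique hpq ha.1.2 ha.2.2 hb.1.2 hb.2.2

lemma sum_card_linesThrough_le {K : Type*} [Field K] (L P : Finset (K × K)) :
    ∑ p ∈ P, (linesThrough L p).card ≤ (P.biUnion (linesThrough L)).card + P.card ^ 2 :=
  sum_card_le_card_biUnion_add_sq P _ fun _ _ _ _ h => card_linesThrough_inter_le_one L h

/-- A norm on `ℂ²` adapted to the direction of slope `γ`. -/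
noncomputable def slantNorm (γ : ℂ) (v : ℂ × ℂ) : ℝ := ‖v.1‖ + ‖v.2 - γ * v.1‖ / 2

/-- The points of `P` closer to `p`, in the norm adapted to the line `a`, than every other point
of `P` on `a`. -/
noncomputable def closePoints (P : Finset (ℂ × ℂ)) (p a : ℂ × ℂ) : Finset (ℂ × ℂ) :=
  P.filter fun q => ∀ x ∈ P, x ≠ p → OnGraph x a → slantNorm a.1 (q - p) < ‖x.1 - p.1‖

/-- The lines of `A` through `p` for which `p` has at least `s` close points. -/
noncomputable def goodLines (P A : Finset (ℂ × ℂ)) (s : ℕ) (p : ℂ × ℂ) : Finset (ℂ × ℂ) :=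
  (linesThrough A p).filter fun a => s ≤ (closePoints P p a).card

/-- The points of `P` on at least `s` good lines. -/
noncomputable def goodPoints (P A : Finset (ℂ × ℂ)) (s : ℕ) : Finset (ℂ × ℂ) :=
  P.filter fun p => s ≤ (goodLines P A s p).card

/-- Projection onto a flat line along a steep line does not increase the adapted norm. -/
lemma norm_sub_le_slantNorm {a b p q z : ℂ × ℂ} (ha : ‖a.1‖ ≤ 1 / 4) (hb : ‖b.1‖ ≤ 1 / 4)
    (hpa : OnGraph p a) (hza : OnGraph z a) (hzb : OnGraph z.swap b) (hqb : OnGraph q.swap b) :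
    ‖p.1 - z.1‖ ≤ slantNorm a.1 (q - p) := by
  simp only [OnGraph, Prod.fst_swap, Prod.snd_swap] at *
  have h1 : (q - p).1 = b.1 * (q.2 - z.2) - (p.1 - z.1) := by
    simp only [Prod.fst_sub]; linear_combination hqb - hzb
  have h2 : (q - p).2 - a.1 * (q - p).1 = (1 - a.1 * b.1) * (q.2 - z.2) := by
    simp only [Prod.fst_sub, Prod.snd_sub]
    linear_combination hza - hpa - a.1 * hqb + a.1 * hzb
  have h3 : ‖p.1 - z.1‖ ≤ ‖(q - p).1‖ + ‖b.1 * (q.2 - z.2)‖ := by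
    have := norm_sub_le (b.1 * (q.2 - z.2)) ((q - p).1)
    rw [show b.1 * (q.2 - z.2) - (q - p).1 = p.1 - z.1 by rw [h1]; ring] at this
    linarith
  have h4 : 1 / 2 ≤ ‖1 - a.1 * b.1‖ := by
    have h := norm_sub_norm_le (1 : ℂ) (a.1 * b.1)
    rw [norm_one, norm_mul] at h
    nlinarith [norm_nonneg a.1, norm_nonneg b.1]
  rw [slantNorm, h2, norm_mul]
  rw [norm_mul] at h3
  nlinarith [norm_nonneg (q.2 - z.2)]

/-- A flat line and a steep line meet. -/
lemma exists_onGraph_onGraph_swap {a b : ℂ × ℂ} (ha : ‖a.1‖ ≤ 1 / 4) (hb : ‖b.1‖ ≤ 1 / 4) :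
    ∃ z : ℂ × ℂ, OnGraph z a ∧ OnGraph z.swap b := by
  have hne : 1 - b.1 * a.1 ≠ 0 := by
    intro h
    have h1 : b.1 * a.1 = 1 := by linear_combination -h
    have h2 : ‖b.1‖ * ‖a.1‖ = 1 := by rw [← norm_mul, h1, norm_one]
    nlinarith [norm_nonneg a.1, norm_nonneg b.1]
  refine ⟨((b.1 * a.2 + b.2) / (1 - b.1 * a.1),
    a.1 * ((b.1 * a.2 + b.2) / (1 - b.1 * a.1)) + a.2), rfl, ?_⟩
  simp only [OnGraph, Prod.fst_swap, Prod.snd_swap]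
  field_simp
  ring

/-- A flat line `a` and a steep line `b` are linked by few points of `a`. -/
lemma card_linking_points_le (P : Finset (ℂ × ℂ)) {a b : ℂ × ℂ} (ha : ‖a.1‖ ≤ 1 / 4)
    (hb : ‖b.1‖ ≤ 1 / 4) :
    (P.filter fun p => OnGraph p a ∧ ∃ q ∈ closePoints P p a, OnGraph q.swap b).card ≤ 25 := by
  obtain ⟨z, hza, hzb⟩ := exists_onGraph_onGraph_swap ha hb
  rw [← Finset.card_image_of_injOn (f := Prod.fst)]
  · refine card_le_of_norm_sub_lt _ z.1 ?_
    simp only [Finset.mem_image, Finset.mem_filter]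
    rintro _ ⟨p, ⟨hp, hpa, q, hq, hqb⟩, rfl⟩ _ ⟨p', ⟨hp', hpa', -⟩, rfl⟩ hne
    rw [closePoints, Finset.mem_filter] at hq
    rw [norm_sub_rev p.1 p'.1]
    exact (norm_sub_le_slantNorm ha hb hpa hza hzb hqb).trans_lt
      (hq.2 p' hp' (fun e => hne (by rw [e])) hpa')
  · intro p hp q hq h
    simp only [Finset.coe_filter, Set.mem_ofPred_eq] at hp hq
    exact hp.2.1.ext_fst hq.2.1 h

/-- Points on `2 * s` lines each: any `s` of them meet at least `s ^ 2` lines. -/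
lemma sq_le_card_biUnion_linesThrough {K : Type*} [Field K] (L S : Finset (K × K)) {s : ℕ}
    (hS : S.card ≤ s) (h : ∀ p ∈ S, 2 * s ≤ (linesThrough L p).card) :
    S.card * s ≤ (S.biUnion (linesThrough L)).card := by
  have h1 := Finset.card_nsmul_le_sum S _ _ h
  have h2 := sum_card_linesThrough_le L S
  rw [smul_eq_mul] at h1
  nlinarith

lemma card_goodPoints_mul_le (P A B : Finset (ℂ × ℂ)) (s : ℕ) (hA : ∀ a ∈ A, ‖a.1‖ ≤ 1 / 4)
    (hB : ∀ b ∈ B, ‖b.1‖ ≤ 1 / 4) (hPB : ∀ p ∈ P, 2 * s ≤ (linesThrough B p.swap).card) :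
    (goodPoints P A s).card * s ^ 3 ≤ 25 * (A.card * B.card) := by
  let R : ℂ × ℂ → ℂ × ℂ → ℂ × ℂ → Prop := fun p a b =>
    OnGraph p a ∧ ∃ q ∈ closePoints P p a, OnGraph q.swap b
  have hlines : ∀ p a, OnGraph p a → s ≤ (closePoints P p a).card →
      s ^ 2 ≤ (B.filter fun b => R p a b).card := by
    intro p a hpa hs
    obtain ⟨S, hSsub, hScard⟩ := Finset.exists_subset_card_eq hs
    have hcard : (S.image Prod.swap).card = s := by
      rw [Finset.card_image_of_injective _ Prod.swap_injective, hScard]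
    have h := sq_le_card_biUnion_linesThrough B (S.image Prod.swap) hcard.le (by
      simp only [Finset.mem_image]
      rintro _ ⟨q, hq, rfl⟩
      exact hPB q (Finset.mem_of_mem_filter q (hSsub hq)))
    rw [hcard, ← sq] at h
    refine h.trans (Finset.card_le_card fun b hb => ?_)
    simp only [Finset.mem_biUnion, Finset.mem_image, mem_linesThrough] at hb
    obtain ⟨_, ⟨q, hq, rfl⟩, hbB, hqb⟩ := hb
    exact Finset.mem_filter.2 ⟨hbB, hpa, q, hSsub hq, hqb⟩
  calc (goodPoints P A s).card * s ^ 3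
      ≤ ∑ p ∈ goodPoints P A s, ∑ a ∈ A, (B.filter fun b => R p a b).card := by
        rw [← smul_eq_mul]
        refine Finset.card_nsmul_le_sum _ _ _ fun p hp => ?_
        have hp' := (Finset.mem_filter.1 hp).2
        calc s ^ 3 = s * s ^ 2 := by ring
          _ ≤ (goodLines P A s p).card * s ^ 2 := Nat.mul_le_mul_right _ hp'
          _ ≤ ∑ a ∈ goodLines P A s p, (B.filter fun b => R p a b).card := by
            rw [← smul_eq_mul]
            refine Finset.card_nsmul_le_sum _ _ _ fun a ha => ?_
            rw [goodLines, Finset.mem_filter, mem_linesThrough] at ha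
            exact hlines p a ha.1.2 ha.2
          _ ≤ ∑ a ∈ A, (B.filter fun b => R p a b).card :=
            Finset.sum_le_sum_of_subset
              ((Finset.filter_subset _ _).trans (Finset.filter_subset _ _))
    _ ≤ ∑ p ∈ P, ∑ a ∈ A, (B.filter fun b => R p a b).card :=
        Finset.sum_le_sum_of_subset (Finset.filter_subset _ _)
    _ = ∑ a ∈ A, ∑ b ∈ B, (P.filter fun p => R p a b).card := by
        rw [Finset.sum_comm]
        refine Finset.sum_congr rfl fun a _ => ?_
        exact Finset.sum_card_bipartiteAbove_eq_sum_card_bipartiteBelow (fun p b => R p a b)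
    _ ≤ ∑ a ∈ A, ∑ b ∈ B, 25 :=
        Finset.sum_le_sum fun a ha => Finset.sum_le_sum fun b hb =>
          card_linking_points_le P (hA a ha) (hB b hb)
    _ = 25 * (A.card * B.card) := by simp; ring

/-- Around a point that is not good, many points of `P` lie in a flat cone at distance at most
`r`, but few points lie in a ball of radius `r` for an adapted norm. -/
lemma exists_cone_points_of_not_good {P A : Finset (ℂ × ℂ)} {s : ℕ} {p : ℂ × ℂ}
    (hA : ∀ a ∈ A, ‖a.1‖ ≤ 1 / 4) (hs : 0 < s) (hsP : s ≤ P.card) (hp : p ∈ P)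
    (hpA : 2 * s ≤ (linesThrough A p).card) (hbad : p ∉ goodPoints P A s) :
    ∃ r : ℝ, 0 < r ∧ ∃ a ∈ A, ∃ T ⊆ P, s ≤ T.card ∧
      (∀ q ∈ T, ‖(q - p).1‖ ≤ r ∧ ‖(q - p).2‖ ≤ r / 4) ∧
      (P.filter fun q => slantNorm a.1 (q - p) < r).card < s := by
  have hgood : (goodLines P A s p).card < s := by
    by_contra h
    exact hbad (Finset.mem_filter.2 ⟨hp, not_lt.1 h⟩)
  set D := (linesThrough A p).filter fun a => ¬ s ≤ (closePoints P p a).card with hD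
  have hDcard : s ≤ D.card := by
    have h := Finset.card_filter_add_card_filter_not (s := linesThrough A p)
      (fun a => s ≤ (closePoints P p a).card)
    change (goodLines P A s p).card + D.card = _ at h
    omega
  have hDmem : ∀ a ∈ D, a ∈ A ∧ OnGraph p a ∧ (closePoints P p a).card < s := by
    intro a ha
    rw [hD, Finset.mem_filter, mem_linesThrough, not_le] at ha
    exact ⟨ha.1.1, ha.1.2, ha.2⟩
  have hnear : ∀ a ∈ D, ∃ q ∈ P, q ≠ p ∧ OnGraph q a ∧
      ∀ q' ∈ P, q' ≠ p → OnGraph q' a → ‖q.1 - p.1‖ ≤ ‖q'.1 - p.1‖ := by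
    intro a ha
    have hne : (P.filter fun q => q ≠ p ∧ OnGraph q a).Nonempty := by
      by_contra hemp
      rw [Finset.not_nonempty_iff_eq_empty, Finset.filter_eq_empty_iff] at hemp
      have hall : closePoints P p a = P :=
        Finset.filter_true_of_mem fun q _ p' hp' hne hon => absurd ⟨hne, hon⟩ (hemp hp')
      have := (hDmem a ha).2.2
      rw [hall] at this
      omega
    obtain ⟨q, hq, hmin⟩ := Finset.exists_min_image _ (fun q : ℂ × ℂ => ‖q.1 - p.1‖) hne
    rw [Finset.mem_filter] at hq
    exact ⟨q, hq.1, hq.2.1, hq.2.2, fun q' h1 h2 h3 => hmin q' (Finset.mem_filter.2 ⟨h1, h2, h3⟩)⟩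
  choose! f hfP hfne hfon hfmin using hnear
  have hDne : D.Nonempty := Finset.card_pos.1 (hs.trans_le hDcard)
  obtain ⟨a₀, ha₀, hmax⟩ := Finset.exists_max_image D (fun a => ‖(f a).1 - p.1‖) hDne
  refine ⟨‖(f a₀).1 - p.1‖, ?_, a₀, (hDmem a₀ ha₀).1, D.image f, ?_, ?_, ?_, ?_⟩
  · rw [norm_pos_iff, sub_ne_zero]
    exact fun h => hfne a₀ ha₀ ((hfon a₀ ha₀).ext_fst (hDmem a₀ ha₀).2.1 h)
  · exact Finset.image_subset_iff.2 hfP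
  · rw [Finset.card_image_of_injOn]
    · exact hDcard
    · intro a ha b hb hab
      refine OnGraph.line_unique (hfne a ha) (hfon a ha) (hDmem a ha).2.1 ?_ (hDmem b hb).2.1
      rw [hab]
      exact hfon b hb
  · simp only [Finset.mem_image]
    rintro _ ⟨a, ha, rfl⟩
    have h1 : ‖(f a - p).1‖ ≤ ‖(f a₀).1 - p.1‖ := hmax a ha
    refine ⟨h1, ?_⟩
    have h2 : (f a - p).2 = a.1 * (f a - p).1 := by
      have e1 := hfon a ha
      have e2 := (hDmem a ha).2.1
      unfold OnGraph at e1 e2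
      simp only [Prod.fst_sub, Prod.snd_sub]
      linear_combination e1 - e2
    rw [h2, norm_mul]
    have := hA a (hDmem a ha).1
    nlinarith [norm_nonneg (f a - p).1, norm_nonneg a.1]
  · refine (Finset.card_le_card fun q hq => ?_).trans_lt (hDmem a₀ ha₀).2.2
    rw [Finset.mem_filter] at hq
    exact Finset.mem_filter.2 ⟨hq.1, fun p' h1 h2 h3 => hq.2.trans_le (hfmin a₀ ha₀ p' h1 h2 h3)⟩

lemma slantNorm_swap_lt {b v : ℂ × ℂ} {r r' : ℝ} (hb : ‖b.1‖ ≤ 1 / 4) (hr : 0 < r) (hrr : r ≤ r')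
    (h1 : ‖v.1‖ ≤ r) (h2 : ‖v.2‖ ≤ r / 4) : slantNorm b.1 v.swap < r' := by
  have h3 := norm_sub_le v.1 (b.1 * v.2)
  rw [norm_mul] at h3
  have h4 : ‖b.1‖ * ‖v.2‖ ≤ 1 / 4 * (r / 4) :=
    mul_le_mul hb h2 (norm_nonneg _) (by norm_num)
  simp only [slantNorm, Prod.fst_swap, Prod.snd_swap]
  linarith

/-- Every point is good for the flat lines or for the steep lines. -/
lemma mem_goodPoints_or_swap_mem {P A B : Finset (ℂ × ℂ)} {s : ℕ} {p : ℂ × ℂ}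
    (hA : ∀ a ∈ A, ‖a.1‖ ≤ 1 / 4) (hB : ∀ b ∈ B, ‖b.1‖ ≤ 1 / 4) (hs : 0 < s) (hsP : s ≤ P.card)
    (hp : p ∈ P) (hpA : 2 * s ≤ (linesThrough A p).card)
    (hpB : 2 * s ≤ (linesThrough B p.swap).card) :
    p ∈ goodPoints P A s ∨ p.swap ∈ goodPoints (P.image Prod.swap) B s := by
  by_contra! hcon
  obtain ⟨r, hr, a, ha, T, hTP, hT, hTr, hfew⟩ :=
    exists_cone_points_of_not_good hA hs hsP hp hpA hcon.1
  obtain ⟨r', hr', b, hb, T', hTP', hT', hTr', hfew'⟩ :=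
    exists_cone_points_of_not_good (P := P.image Prod.swap) hB hs
      (by rwa [Finset.card_image_of_injective _ Prod.swap_injective])
      (Finset.mem_image_of_mem _ hp) hpB hcon.2
  rcases le_total r r' with hle | hle
  · refine absurd (hT.trans ?_) (not_le.2 hfew')
    rw [← Finset.card_image_of_injective T Prod.swap_injective]
    refine Finset.card_le_card fun x hx => ?_
    obtain ⟨q, hq, rfl⟩ := Finset.mem_image.1 hx
    refine Finset.mem_filter.2 ⟨Finset.mem_image_of_mem _ (hTP hq), ?_⟩
    exact slantNorm_swap_lt (v := q - p) (hB b hb) hr hle (hTr q hq).1 (hTr q hq).2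
  · refine absurd (hT'.trans ?_) (not_le.2 hfew)
    rw [← Finset.card_image_of_injective T' Prod.swap_injective]
    refine Finset.card_le_card fun x hx => ?_
    obtain ⟨q, hq, rfl⟩ := Finset.mem_image.1 hx
    obtain ⟨q', hq', rfl⟩ := Finset.mem_image.1 (hTP' hq)
    refine Finset.mem_filter.2 ⟨by simpa using hq', ?_⟩
    exact slantNorm_swap_lt (v := q'.swap - p.swap) (hA a ha) hr' hle (hTr' _ hq).1 (hTr' _ hq).2

lemma card_mul_le_of_flat_steep (P A B : Finset (ℂ × ℂ)) {s : ℕ} (hA : ∀ a ∈ A, ‖a.1‖ ≤ 1 / 4)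
    (hB : ∀ b ∈ B, ‖b.1‖ ≤ 1 / 4) (hs : 0 < s) (hsP : s ≤ P.card)
    (hPA : ∀ p ∈ P, 2 * s ≤ (linesThrough A p).card)
    (hPB : ∀ p ∈ P, 2 * s ≤ (linesThrough B p.swap).card) :
    P.card * s ^ 3 ≤ 50 * (A.card * B.card) := by
  have h1 := card_goodPoints_mul_le P A B s hA hB hPB
  have h2 := card_goodPoints_mul_le (P.image Prod.swap) B A s hB hA (by
    simp only [Finset.mem_image]
    rintro _ ⟨p, hp, rfl⟩
    simpa using hPA p hp)
  have h3 : P.card ≤ (goodPoints P A s).card + (goodPoints (P.image Prod.swap) B s).card := by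
    rw [← Finset.card_image_of_injective (goodPoints (P.image Prod.swap) B s) Prod.swap_injective]
    refine (Finset.card_le_card fun p hp => ?_).trans (Finset.card_union_le _ _)
    rw [Finset.mem_union]
    refine (mem_goodPoints_or_swap_mem hA hB hs hsP hp (hPA p hp) (hPB p hp)).imp_right fun h => ?_
    exact Finset.mem_image.2 ⟨_, h, Prod.swap_swap p⟩
  nlinarith [Nat.mul_le_mul_right (s ^ 3) h3]

/-- Points on many lines with slope near `c` and many lines with slope far from `c`. -/
lemma card_mul_le_of_separated_slopes (L P : Finset (ℂ × ℂ)) (c : ℂ) {ρ : ℝ} (hρ : 0 < ρ) {s : ℕ}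
    (hs : 0 < s)
    (hnear : ∀ p ∈ P, 2 * s ≤ (linesThrough (L.filter fun a => ‖a.1 - c‖ ≤ ρ) p).card)
    (hfar : ∀ p ∈ P, 2 * s ≤ (linesThrough (L.filter fun a => 16 * ρ < ‖a.1 - c‖) p).card) :
    P.card * s ^ 3 ≤ 50 * L.card ^ 2 ∨ P.card * s ≤ L.card := by
  rcases lt_or_ge P.card s with hPs | hPs
  · right
    refine (sq_le_card_biUnion_linesThrough _ P hPs.le hnear).trans (Finset.card_le_card ?_)
    exact Finset.biUnion_subset.2 fun p _ =>
      (Finset.filter_subset _ _).trans (Finset.filter_subset _ _)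
  left
  have hρ₀ : (ρ : ℂ) ≠ 0 := by exact_mod_cast hρ.ne'
  have hρC : (4 * ρ : ℂ) ≠ 0 := by simpa using hρ₀
  let τ : ℂ × ℂ → ℂ × ℂ := fun p => (p.1, (p.2 - c * p.1) / (4 * ρ))
  let flat : ℂ × ℂ → ℂ × ℂ := fun a => ((a.1 - c) / (4 * ρ), a.2 / (4 * ρ))
  let steep : ℂ × ℂ → ℂ × ℂ := fun a => (4 * ρ / (a.1 - c), -a.2 / (a.1 - c))
  have hτ : Function.Injective τ := by
    intro p q h
    simp only [τ, Prod.mk.injEq] at h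
    have h2 := (div_left_inj' hρC).1 h.2
    exact Prod.ext h.1 (by rw [h.1] at h2; exact sub_left_inj.1 h2)
  have hflat : Function.Injective flat := by
    intro a b h
    simp only [flat, Prod.mk.injEq, div_left_inj' hρC, sub_left_inj] at h
    exact Prod.ext h.1 h.2
  have hfar_ne : ∀ a : ℂ × ℂ, 16 * ρ < ‖a.1 - c‖ → a.1 - c ≠ 0 := by
    intro a ha h
    rw [h, norm_zero] at ha
    linarith
  have hsteep : ∀ a b : ℂ × ℂ, a.1 - c ≠ 0 → b.1 - c ≠ 0 → steep a = steep b → a = b := by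
    intro a b ha hb h
    simp only [steep, Prod.mk.injEq] at h
    have h1 : a.1 - c = b.1 - c := by
      have := h.1
      rw [div_eq_div_iff ha hb] at this
      exact (mul_left_cancel₀ hρC this).symm
    refine Prod.ext (sub_left_inj.1 h1) ?_
    have h2 := h.2
    rw [h1, div_left_inj' hb] at h2
    exact neg_injective h2
  set N := L.filter fun a => ‖a.1 - c‖ ≤ ρ
  set F := L.filter fun a => 16 * ρ < ‖a.1 - c‖
  have key := card_mul_le_of_flat_steep (P.image τ) (N.image flat) (F.image steep) (s := s)
    ?_ ?_ hs ?_ ?_ ?_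
  · rw [Finset.card_image_of_injective _ hτ] at key
    refine key.trans (Nat.mul_le_mul_left _ ?_)
    rw [sq]
    exact Nat.mul_le_mul (Finset.card_image_le.trans (Finset.card_filter_le _ _))
      (Finset.card_image_le.trans (Finset.card_filter_le _ _))
  · simp only [Finset.mem_image]
    rintro _ ⟨a, ha, rfl⟩
    have ha' := (Finset.mem_filter.1 ha).2
    simp only [flat, norm_div, norm_mul, Complex.norm_real, Real.norm_of_nonneg hρ.le,
      Complex.norm_ofNat]
    rw [div_le_iff₀ (by positivity)]
    linarith
  · simp only [Finset.mem_image]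
    rintro _ ⟨a, ha, rfl⟩
    have ha' := (Finset.mem_filter.1 ha).2
    simp only [steep, norm_div, norm_mul, Complex.norm_real, Real.norm_of_nonneg hρ.le,
      Complex.norm_ofNat]
    rw [div_le_iff₀ (by linarith)]
    linarith
  · rwa [Finset.card_image_of_injective _ hτ]
  · simp only [Finset.mem_image]
    rintro _ ⟨p, hp, rfl⟩
    refine (hnear p hp).trans ?_
    rw [← Finset.card_image_of_injective _ hflat]
    refine Finset.card_le_card fun x hx => ?_
    obtain ⟨a, ha, rfl⟩ := Finset.mem_image.1 hx
    rw [mem_linesThrough] at ha ⊢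
    refine ⟨Finset.mem_image_of_mem _ ha.1, ?_⟩
    have h := ha.2
    simp only [OnGraph, τ, flat] at h ⊢
    rw [h]
    ring
  · simp only [Finset.mem_image]
    rintro _ ⟨p, hp, rfl⟩
    refine (hfar p hp).trans ?_
    rw [← Finset.card_image_of_injOn (f := steep)]
    · refine Finset.card_le_card fun x hx => ?_
      obtain ⟨a, ha, rfl⟩ := Finset.mem_image.1 hx
      rw [mem_linesThrough] at ha ⊢
      refine ⟨Finset.mem_image_of_mem _ ha.1, ?_⟩
      have h := ha.2
      have hne := hfar_ne a (Finset.mem_filter.1 ha.1).2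
      simp only [OnGraph, τ, steep, Prod.fst_swap, Prod.snd_swap] at h ⊢
      rw [h]
      field_simp
      ring
    · intro a ha b hb h
      exact hsteep a b (hfar_ne a (Finset.mem_filter.1 (mem_linesThrough.1 ha).1).2)
        (hfar_ne b (Finset.mem_filter.1 (mem_linesThrough.1 hb).1).2) h

lemma card_linesThrough_filter_add {K : Type*} [Field K] (L : Finset (K × K)) (q : K × K → Prop)
    (p : K × K) :
    (linesThrough (L.filter q) p).card + (linesThrough (L.filter fun a => ¬ q a) p).card =
      (linesThrough L p).card := by
  unfold linesThrough
  rw [Finset.filter_comm q, Finset.filter_comm fun a => ¬ q a]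
  exact Finset.card_filter_add_card_filter_not q

lemma card_le_sq_of_two_le_card_linesThrough {K : Type*} [Field K] (L P : Finset (K × K))
    (h : ∀ p ∈ P, 1 < (linesThrough L p).card) : P.card ≤ L.card ^ 2 := by
  have h' : ∀ p ∈ P, ∃ x : (K × K) × (K × K), x.1 ∈ linesThrough L p ∧ x.2 ∈ linesThrough L p ∧
      x.1 ≠ x.2 := fun p hp => by
    obtain ⟨a, ha, b, hb, hab⟩ := Finset.one_lt_card.1 (h p hp)
    exact ⟨(a, b), ha, hb, hab⟩
  choose! f h1 h2 h3 using h'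
  rw [sq, ← Finset.card_product]
  refine Finset.card_le_card_of_injOn f (fun p hp => ?_) fun p hp q hq hpq => ?_
  · exact Finset.mem_product.2
      ⟨(mem_linesThrough.1 (h1 p hp)).1, (mem_linesThrough.1 (h2 p hp)).1⟩
  · by_contra hne
    refine h3 p hp (OnGraph.line_unique hne (mem_linesThrough.1 (h1 p hp)).2 ?_
      (mem_linesThrough.1 (h2 p hp)).2 ?_)
    · rw [hpq]; exact (mem_linesThrough.1 (h1 q hq)).2
    · rw [hpq]; exact (mem_linesThrough.1 (h2 q hq)).2

/-- Either there are few `t`-rich points, or there are at least about `t ^ 2` lines. -/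
lemma card_le_or_sq_le_of_rich {K : Type*} [Field K] (L P : Finset (K × K)) {t : ℝ} (ht : 2 ≤ t)
    (h : ∀ p ∈ P, t ≤ (linesThrough L p).card) :
    (P.card : ℝ) ≤ 2 * (L.card / t) ∨ t ^ 2 ≤ 8 * L.card := by
  have key : ∀ S ⊆ P, (S.card : ℝ) ≤ t / 2 → (S.card : ℝ) * t ≤ 2 * L.card := by
    intro S hS hSt
    have h1 := Finset.card_nsmul_le_sum S (fun p => ((linesThrough L p).card : ℝ)) t
      fun p hp => h p (hS hp)
    have h2 := (sum_card_linesThrough_le L S).trans (Nat.add_le_add_right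
      (Finset.card_le_card (Finset.biUnion_subset.2 fun p _ => Finset.filter_subset _ L)) _)
    have h3 : ∑ p ∈ S, ((linesThrough L p).card : ℝ) ≤ L.card + (S.card : ℝ) ^ 2 := by
      exact_mod_cast h2
    rw [nsmul_eq_mul] at h1
    nlinarith [Nat.cast_nonneg (α := ℝ) S.card]
  rcases le_total (P.card : ℝ) (t / 2) with hP | hP
  · left
    have := key P (Finset.Subset.refl P) hP
    rw [← mul_div_assoc, le_div_iff₀ (by linarith)]
    exact this
  · right
    have hfl : ⌊t / 2⌋₊ ≤ P.card := Nat.floor_le_of_le hP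
    obtain ⟨S, hS, hScard⟩ := Finset.exists_subset_card_eq hfl
    have h1 : (⌊t / 2⌋₊ : ℝ) ≤ t / 2 := Nat.floor_le (by linarith)
    have h2 : t / 2 < ⌊t / 2⌋₊ + 1 := Nat.lt_floor_add_one _
    have h3 : (1 : ℝ) ≤ ⌊t / 2⌋₊ := by
      exact_mod_cast (Nat.le_floor (by push_cast; linarith) : 1 ≤ ⌊t / 2⌋₊)
    have := key S hS (by rw [hScard]; exact h1)
    rw [hScard] at this
    nlinarith

/-- Either many lines are parallel, or the slopes can be split at a scale `ρ` in a favourable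
proportion. -/
lemma exists_parallel_or_scale (L : Finset (ℂ × ℂ)) (hL : L.Nonempty) :
    (∃ γ : ℂ, (2 : ℝ)⁻¹ ^ 60 * L.card ≤ (L.filter fun a => a.1 = γ).card) ∨
    ∃ (c : ℂ) (ρ : ℝ), 0 < ρ ∧
      (2 : ℝ)⁻¹ ^ 60 * L.card ≤ (L.filter fun a => ‖a.1 - c‖ ≤ ρ).card ∧
      ((L.filter fun a => ‖a.1 - c‖ ≤ 16 * ρ).card : ℝ) ≤ L.card / 2 ∧
      ((L.filter fun a => ‖a.1 - c‖ ≤ 16 * ρ).card : ℝ) ^ 2 ≤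
        (L.filter fun a => ‖a.1 - c‖ ≤ ρ).card * L.card := by
  have hn : (0 : ℝ) < L.card := by exact_mod_cast hL.card_pos
  set x : ℝ := (2 : ℝ)⁻¹ ^ 60 * L.card with hx
  have hfull : ∀ W ⊆ L, W.Nonempty → x ≤ W.card → ∀ a : ℂ × ℂ, ∃ b ∈ W,
      x ≤ (L.filter fun j => ‖j.1 - a.1‖ ≤ ‖b.1 - a.1‖).card := by
    intro W hW hne hxW a
    obtain ⟨b, hb, hmax⟩ := Finset.exists_max_image W (fun j => ‖j.1 - a.1‖) hne
    refine ⟨b, hb, hxW.trans ?_⟩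
    exact_mod_cast Finset.card_le_card fun j hj => Finset.mem_filter.2 ⟨hW hj, hmax j hj⟩
  let Q := (L ×ˢ L).filter fun ab =>
    x ≤ (L.filter fun j => ‖j.1 - ab.1.1‖ ≤ ‖ab.2.1 - ab.1.1‖).card
  have hQ : Q.Nonempty := by
    obtain ⟨a, ha⟩ := hL
    obtain ⟨b, hb, h⟩ := hfull L (Finset.Subset.refl L) ⟨a, ha⟩
      (by rw [hx]; exact mul_le_of_le_one_left hn.le (by norm_num)) a
    exact ⟨(a, b), Finset.mem_filter.2 ⟨Finset.mem_product.2 ⟨ha, hb⟩, h⟩⟩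
  obtain ⟨⟨a, b⟩, hab, hmin⟩ := Finset.exists_min_image Q (fun ab => ‖ab.2.1 - ab.1.1‖) hQ
  have habx := (Finset.mem_filter.1 hab).2
  simp only at habx hmin
  set r := ‖b.1 - a.1‖ with hr
  rcases (norm_nonneg (b.1 - a.1)).eq_or_lt' with h0 | hpos
  · left
    refine ⟨a.1, ?_⟩
    rw [← hr] at h0
    simpa [h0, sub_eq_zero] using habx
  right
  rw [← hr] at hpos
  have hsmall : ∀ i ∈ L, ((L.filter fun j => ‖j.1 - i.1‖ < r).card : ℝ) < x := by
    intro i hi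
    by_contra! hge
    obtain ⟨b', hb', h⟩ := hfull _ (Finset.filter_subset _ L)
      ⟨i, Finset.mem_filter.2 ⟨hi, by simpa using hpos⟩⟩ hge i
    rw [Finset.mem_filter] at hb'
    have := hmin (i, b') (Finset.mem_filter.2 ⟨Finset.mem_product.2 ⟨hi, hb'.1⟩, h⟩)
    exact absurd this (not_le.2 hb'.2)
  let N : ℕ → ℝ := fun j => ((L.filter fun i => ‖i.1 - a.1‖ ≤ 16 ^ j * r).card : ℝ) / L.card
  have hN0 : (2 : ℝ)⁻¹ ^ 60 ≤ N 0 := by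
    rw [le_div_iff₀ hn, ← hx]
    simpa using habx
  have hmono : Monotone N := by
    refine monotone_nat_of_le_succ fun j => ?_
    refine div_le_div_of_nonneg_right ?_ hn.le
    refine Nat.cast_le.2 (Finset.card_le_card fun i hi => ?_)
    rw [Finset.mem_filter] at hi ⊢
    refine ⟨hi.1, hi.2.trans ?_⟩
    rw [pow_succ]
    nlinarith [pow_pos (by norm_num : (0 : ℝ) < 16) j]
  have hN6 : N 6 ≤ 1 / 2 := by
    have h := card_le_of_card_disc_le (L.filter fun i => ‖i.1 - a.1‖ ≤ 16 ^ 6 * r) Prod.fst a.1 hpos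
      (16 ^ 6) ⌊x⌋₊ (fun i hi => by
        refine Nat.le_floor ((Nat.cast_le.2 (Finset.card_le_card ?_)).trans
          (hsmall i (Finset.mem_of_mem_filter i hi)).le)
        exact Finset.filter_subset_filter _ (Finset.filter_subset _ _))
      (fun i hi => (Finset.mem_filter.1 hi).2.trans_eq (by norm_num))
    have h' : ((L.filter fun i => ‖i.1 - a.1‖ ≤ 16 ^ 6 * r).card : ℝ) ≤
        (⌊x⌋₊ : ℝ) * (4 * 16 ^ 6 + 1) ^ 2 := by exact_mod_cast h
    have hfl : (⌊x⌋₊ : ℝ) ≤ x := Nat.floor_le (by positivity)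
    simp only [N]
    rw [div_le_iff₀ hn]
    refine h'.trans ((mul_le_mul_of_nonneg_right hfl (by positivity)).trans ?_)
    rw [hx]
    norm_num
    linarith
  have hstep : ∃ j < 6, N (j + 1) ^ 2 ≤ N j := by
    by_contra! hcon
    have hnn : ∀ j, 0 ≤ N j := fun j => by positivity
    have hsq : ∀ j < 6, ∀ y, N (j + 1) ≤ y → N j ≤ y ^ 2 := fun j hj y hy =>
      (hcon j hj).le.trans (pow_le_pow_left₀ (hnn _) hy 2)
    have := hsq 0 (by norm_num) _ <| hsq 1 (by norm_num) _ <| hsq 2 (by norm_num) _ <|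
      hsq 3 (by norm_num) _ <| hsq 4 (by norm_num) _ <| hsq 5 (by norm_num) _ hN6
    have := hN0.trans this
    norm_num at this
  obtain ⟨j, hj, hjN⟩ := hstep
  have e : (16 : ℝ) * (16 ^ j * r) = 16 ^ (j + 1) * r := by ring
  refine ⟨a.1, 16 ^ j * r, by positivity, ?_, ?_, ?_⟩
  · have := hN0.trans (hmono (Nat.zero_le j))
    rwa [le_div_iff₀ hn] at this
  · have := (hmono (by omega : j + 1 ≤ 6)).trans hN6
    simp only [N] at this
    rw [div_le_iff₀ hn] at this
    rw [e]
    linarith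
  · simp only [N] at hjN
    rw [div_pow, div_le_div_iff₀ (by positivity) hn] at hjN
    rw [e]
    refine le_of_mul_le_mul_right ?_ hn
    linarith

/-- The arithmetic of one step of the induction for rich points. -/
lemma rich_bound_of_step {C n t m X : ℝ} (hC : ((2 : ℝ) ^ 140) ^ 2 ≤ C) (ht : 0 < t) (htn : t ^ 2 ≤ 8 * n)
    (hX : X ≤ (1 - (2 : ℝ)⁻¹ ^ 61) * n ^ 2)
    (hm : m ≤ C * (X / ((1 - (2 : ℝ)⁻¹ ^ 66) * t) ^ 3) + 4 * (n / ((1 - (2 : ℝ)⁻¹ ^ 66) * t)) +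
      2 ^ 210 * (n ^ 2 / t ^ 3) + 2 ^ 68 * (n / t)) :
    m ≤ C * (n ^ 2 / t ^ 3) + 2 * (n / t) := by
  have hn : 0 ≤ n := by nlinarith
  set u := n ^ 2 / t ^ 3 with hu
  have hu0 : 0 ≤ u := by positivity
  have hnt : n / t ≤ 8 * u := by
    rw [hu, ← mul_div_assoc, div_le_div_iff₀ ht (by positivity)]
    nlinarith [mul_le_mul_of_nonneg_left htn (mul_nonneg hn ht.le)]
  have hnt0 : 0 ≤ n / t := by positivity
  have h1 : X / ((1 - (2 : ℝ)⁻¹ ^ 66) * t) ^ 3 ≤ (1 - (2 : ℝ)⁻¹ ^ 62) * u := by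
    rw [hu, ← mul_div_assoc, div_le_div_iff₀ (by norm_num; positivity) (by positivity), mul_pow]
    have : X * t ^ 3 ≤ (1 - (2 : ℝ)⁻¹ ^ 61) * n ^ 2 * t ^ 3 :=
      mul_le_mul_of_nonneg_right hX (by positivity)
    refine this.trans ?_
    have h0 : (0 : ℝ) ≤ n ^ 2 * t ^ 3 := by positivity
    have h2 : (1 - (2 : ℝ)⁻¹ ^ 61) ≤ (1 - (2 : ℝ)⁻¹ ^ 62) * (1 - (2 : ℝ)⁻¹ ^ 66) ^ 3 := by norm_num
    nlinarith [mul_le_mul_of_nonneg_right h2 h0]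
  have h2 : n / ((1 - (2 : ℝ)⁻¹ ^ 66) * t) ≤ 2 * (n / t) := by
    rw [← mul_div_assoc, div_le_div_iff₀ (by norm_num; positivity) ht]
    norm_num
    nlinarith [mul_nonneg hn ht.le]
  have h3 : C * (X / ((1 - (2 : ℝ)⁻¹ ^ 66) * t) ^ 3) ≤ C * u - 2 ^ 218 * u := by
    have := mul_le_mul_of_nonneg_left h1 (le_trans (by positivity) hC : (0 : ℝ) ≤ C)
    have h4 := mul_le_mul_of_nonneg_right hC hu0
    norm_num at this h4 ⊢
    linarith
  norm_num at hm h2 h3 ⊢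
  linarith

/-- One step of the induction for rich points: the bound for smaller sets of lines gives the
bound for `L`. -/
lemma rich_step {C : ℝ} (hC : ((2 : ℝ) ^ 140) ^ 2 ≤ C) (L P : Finset (ℂ × ℂ)) {t : ℝ}
    (ht : (2 : ℝ) ^ 70 ≤ t) (hP : ∀ p ∈ P, t ≤ (linesThrough L p).card)
    (ih : ∀ L' P' : Finset (ℂ × ℂ), L'.card < L.card →
      (∀ p ∈ P', (1 - (2 : ℝ)⁻¹ ^ 66) * t ≤ (linesThrough L' p).card) →
      (P'.card : ℝ) ≤ C * (L'.card ^ 2 / ((1 - (2 : ℝ)⁻¹ ^ 66) * t) ^ 3) +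
        2 * (L'.card / ((1 - (2 : ℝ)⁻¹ ^ 66) * t))) :
    (P.card : ℝ) ≤ C * (L.card ^ 2 / t ^ 3) + 2 * (L.card / t) := by
  have ht0 : 0 < t := lt_of_lt_of_le (by positivity) ht
  have hC0 : 0 < C := lt_of_lt_of_le (by positivity) hC
  have hnt0 : (0 : ℝ) ≤ L.card / t := by positivity
  have hu0 : (0 : ℝ) ≤ L.card ^ 2 / t ^ 3 := by positivity
  rcases card_le_or_sq_le_of_rich L P (ht.trans' (by norm_num)) hP with h | htn
  · exact h.trans (le_add_of_nonneg_left (by positivity))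
  have hn : (0 : ℝ) < L.card := by nlinarith
  have hL : L.Nonempty := Finset.card_pos.1 (by exact_mod_cast hn)
  set t' := (1 - (2 : ℝ)⁻¹ ^ 66) * t with ht'
  have ht'0 : 0 < t' := mul_pos (by norm_num) ht0
  have hsplit : ∀ (q : ℂ × ℂ → Prop) (p : ℂ × ℂ),
      ((linesThrough (L.filter q) p).card : ℝ) +
        (linesThrough (L.filter fun a => ¬ q a) p).card = (linesThrough L p).card :=
    fun q p => by exact_mod_cast card_linesThrough_filter_add L q p
  have hsplit' : ∀ q : ℂ × ℂ → Prop,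
      ((L.filter q).card : ℝ) + (L.filter fun a => ¬ q a).card = L.card :=
    fun q => by exact_mod_cast Finset.card_filter_add_card_filter_not (s := L) q
  rcases exists_parallel_or_scale L hL with ⟨γ, hγ⟩ | ⟨c, ρ, hρ, hV, hV', hVV'⟩
  · set L' := L.filter fun a => ¬ a.1 = γ with hL'
    have hcard : (L'.card : ℝ) ≤ (1 - (2 : ℝ)⁻¹ ^ 60) * L.card := by
      have := hsplit' fun a => a.1 = γ
      linarith
    have h := ih L' P (by
      have : (L'.card : ℝ) < L.card := by nlinarith [hcard, hn]
      exact_mod_cast this) fun p hp => by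
      have h1 := hsplit (fun a => a.1 = γ) p
      have h2 : (linesThrough (L.filter fun a => a.1 = γ) p).card ≤ 1 := by
        refine Finset.card_le_one.2 fun a ha b hb => ?_
        rw [mem_linesThrough, Finset.mem_filter] at ha hb
        have e : a.1 = b.1 := ha.1.2.trans hb.1.2.symm
        refine Prod.ext e ?_
        have ha' := ha.2
        have hb' := hb.2
        unfold OnGraph at ha' hb'
        rw [e] at ha'
        linear_combination hb' - ha'
      have h3 : ((linesThrough (L.filter fun a => a.1 = γ) p).card : ℝ) ≤ 1 := by exact_mod_cast h2
      have h4 := hP p hp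
      have h5 : t' ≤ t - 1 := by
        rw [ht']
        norm_num at ht ⊢
        linarith
      linarith
    refine rich_bound_of_step hC ht0 htn (X := (L'.card : ℝ) ^ 2) ?_ (h.trans ?_)
    · refine (pow_le_pow_left₀ (by positivity) hcard 2).trans ?_
      rw [mul_pow]
      exact mul_le_mul_of_nonneg_right (by norm_num) (by positivity)
    · have h6 : (L'.card : ℝ) / t' ≤ L.card / t' := div_le_div_of_nonneg_right
        (Nat.cast_le.2 (Finset.card_filter_le _ _)) ht'0.le
      have h7 : (0 : ℝ) ≤ L.card / t' := by positivity
      rw [← ht']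
      linarith [mul_nonneg (by positivity : (0 : ℝ) ≤ 2 ^ 210) hu0,
        mul_nonneg (by positivity : (0 : ℝ) ≤ 2 ^ 68) hnt0]
  · set V := L.filter fun a => ‖a.1 - c‖ ≤ ρ with hVdef
    set V' := L.filter fun a => ‖a.1 - c‖ ≤ 16 * ρ with hV'def
    set W := L.filter fun a => ¬ ‖a.1 - c‖ ≤ ρ with hWdef
    have hWcard : (V.card : ℝ) + W.card = L.card := hsplit' _
    have hVpos : (0 : ℝ) < V.card := lt_of_lt_of_le (by positivity) hV
    have hout := ih W (P.filter fun p => t' ≤ (linesThrough W p).card)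
      (by have : (W.card : ℝ) < L.card := by linarith
          exact_mod_cast this) fun p hp => (Finset.mem_filter.1 hp).2
    have hin := ih V' (P.filter fun p => t' ≤ (linesThrough V' p).card)
      (by have : (V'.card : ℝ) < L.card := by linarith
          exact_mod_cast this) fun p hp => (Finset.mem_filter.1 hp).2
    set S := P.filter fun p =>
      (linesThrough W p).card < t' ∧ (linesThrough V' p).card < t' with hS
    have hcover : (P.card : ℝ) ≤ (P.filter fun p => t' ≤ (linesThrough W p).card).card +
        (P.filter fun p => t' ≤ (linesThrough V' p).card).card + S.card := by
      have : P ⊆ ((P.filter fun p => t' ≤ (linesThrough W p).card) ∪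
        (P.filter fun p => t' ≤ (linesThrough V' p).card)) ∪ S := by
        intro p hp
        simp only [hS, Finset.mem_union, Finset.mem_filter, hp, true_and, ← not_le]
        tauto
      have := (Finset.card_le_card this).trans ((Finset.card_union_le _ _).trans
        (Nat.add_le_add_right (Finset.card_union_le _ _) _))
      exact_mod_cast this
    set s := ⌊(2 : ℝ)⁻¹ ^ 67 * t⌋₊ with hs
    have hs1 : (s : ℝ) ≤ (2 : ℝ)⁻¹ ^ 67 * t := Nat.floor_le (by positivity)
    have hs2 : (2 : ℝ)⁻¹ ^ 68 * t ≤ s := by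
      have : (2 : ℝ)⁻¹ ^ 67 * t < s + 1 := Nat.lt_floor_add_one _
      norm_num at this ht ⊢
      linarith
    have hspos : 0 < s := by
      have : (0 : ℝ) < s := lt_of_lt_of_le (by positivity) hs2
      exact_mod_cast this
    have htt : t - t' = 2 * ((2 : ℝ)⁻¹ ^ 67 * t) := by rw [ht']; ring
    have hsep : (S.card : ℝ) ≤ 2 ^ 210 * (L.card ^ 2 / t ^ 3) + 2 ^ 68 * (L.card / t) := by
      have h := card_mul_le_of_separated_slopes L S c hρ hspos (fun p hp => ?_) (fun p hp => ?_)
      · rcases h with h | h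
        · have h' : (S.card : ℝ) * s ^ 3 ≤ 50 * L.card ^ 2 := by exact_mod_cast h
          have h2 : (S.card : ℝ) * ((2 : ℝ)⁻¹ ^ 68 * t) ^ 3 ≤ 50 * L.card ^ 2 := h'.trans'
            (mul_le_mul_of_nonneg_left (pow_le_pow_left₀ (by positivity) hs2 3) (by positivity))
          have h3 : (S.card : ℝ) ≤ 2 ^ 210 * (L.card ^ 2 / t ^ 3) := by
            rw [← mul_div_assoc, le_div_iff₀ (by positivity)]
            rw [mul_pow] at h2
            have : (0 : ℝ) ≤ (L.card : ℝ) ^ 2 := by positivity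
            norm_num at h2 ⊢
            linarith
          linarith [mul_nonneg (by positivity : (0 : ℝ) ≤ 2 ^ 68) hnt0]
        · have h' : (S.card : ℝ) * s ≤ L.card := by exact_mod_cast h
          have h2 : (S.card : ℝ) * ((2 : ℝ)⁻¹ ^ 68 * t) ≤ L.card := h'.trans'
            (mul_le_mul_of_nonneg_left hs2 (by positivity))
          have h3 : (S.card : ℝ) ≤ 2 ^ 68 * (L.card / t) := by
            rw [← mul_div_assoc, le_div_iff₀ (by positivity)]
            norm_num at h2 ⊢
            linarith
          linarith [mul_nonneg (by positivity : (0 : ℝ) ≤ 2 ^ 210) hu0]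
      · obtain ⟨hpP, hpW, -⟩ := Finset.mem_filter.1 hp
        have h1 := hsplit (fun a => ‖a.1 - c‖ ≤ ρ) p
        have h2 := hP p hpP
        have h3 : (2 * s : ℝ) ≤ (linesThrough V p).card := by linarith
        exact_mod_cast h3
      · obtain ⟨hpP, -, hpV⟩ := Finset.mem_filter.1 hp
        have h1 := hsplit (fun a => ‖a.1 - c‖ ≤ 16 * ρ) p
        simp only [not_le] at h1
        have h2 := hP p hpP
        have h3 : (2 * s : ℝ) ≤
            (linesThrough (L.filter fun a => 16 * ρ < ‖a.1 - c‖) p).card := by linarith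
        exact_mod_cast h3
    refine rich_bound_of_step hC ht0 htn (X := (W.card : ℝ) ^ 2 + (V'.card : ℝ) ^ 2) ?_ ?_
    · have hVle : (V.card : ℝ) ≤ V'.card := by
        refine Nat.cast_le.2 (Finset.card_le_card fun a ha => ?_)
        rw [Finset.mem_filter] at ha ⊢
        exact ⟨ha.1, ha.2.trans (by linarith)⟩
      have hW : (W.card : ℝ) = L.card - V.card := by linarith
      rw [hW]
      norm_num at hV ⊢
      nlinarith
    · have h1 : (W.card : ℝ) / t' ≤ L.card / t' := div_le_div_of_nonneg_right
        (Nat.cast_le.2 (Finset.card_filter_le _ _)) ht'0.le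
      have h2 : (V'.card : ℝ) / t' ≤ L.card / t' := div_le_div_of_nonneg_right
        (Nat.cast_le.2 (Finset.card_filter_le _ _)) ht'0.le
      rw [← ht', add_div, mul_add]
      linarith

/-- The number of points lying on at least `t` lines of `L`. -/
lemma card_le_of_rich (L P : Finset (ℂ × ℂ)) {t : ℝ} (ht : 1 < t)
    (hP : ∀ p ∈ P, t ≤ (linesThrough L p).card) :
    (P.card : ℝ) ≤ (2 ^ 140) ^ 2 * (L.card ^ 2 / t ^ 3) + 2 * (L.card / t) := by
  induction hn : L.card using Nat.strong_induction_on generalizing L P t with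
  | _ n ih =>
  subst hn
  have ht0 : 0 < t := by linarith
  rcases le_total ((2 : ℝ) ^ 70) t with hbig | hsmall
  · refine rich_step le_rfl L P hbig hP fun L' P' hlt hP' => ?_
    exact ih L'.card hlt L' P' (by norm_num at hbig ⊢; linarith) hP' rfl
  · have h1 : (P.card : ℝ) ≤ L.card ^ 2 := by
      exact_mod_cast card_le_sq_of_two_le_card_linesThrough L P fun p hp => by
        exact_mod_cast ht.trans_le (hP p hp)
    have h2 : (L.card : ℝ) ^ 2 ≤ (2 ^ 140) ^ 2 * (L.card ^ 2 / t ^ 3) := by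
      rw [← mul_div_assoc, le_div_iff₀ (by positivity), mul_comm]
      refine mul_le_mul_of_nonneg_right ?_ (by positivity)
      refine (pow_le_pow_left₀ ht0.le hsmall 3).trans (by norm_num)
    have h3 : (0 : ℝ) ≤ L.card / t := by positivity
    linarith

lemma mul_le_of_rich_bound {C a w d : ℝ} (hC : 4 ≤ C) (ha : 0 < a) (hw : 0 ≤ w) (hwa : w ≤ a ^ 2)
    (hd : 0 < d) (h : a ^ 3 ≤ C * ((w ^ 3) ^ 2 / d ^ 3) + 2 * (w ^ 3 / d)) :
    d * a ≤ 2 * C * w ^ 2 := by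
  by_contra! hcon
  have h1 : a ^ 3 * d ^ 3 ≤ C * w ^ 6 + 2 * (w ^ 3 * d ^ 2) := by
    have := mul_le_mul_of_nonneg_right h (pow_nonneg hd.le 3)
    refine this.trans (le_of_eq ?_)
    field_simp
  set z := d * a with hz
  have hz0 : 0 < z := mul_pos hd ha
  have h2 : w ^ 3 * d ^ 2 ≤ w ^ 2 * z ^ 2 := by
    have := mul_le_mul_of_nonneg_left hwa (by positivity : 0 ≤ w ^ 2 * d ^ 2)
    rw [hz]
    linarith
  have h3 : z ^ 3 ≤ C * w ^ 6 + 2 * (w ^ 2 * z ^ 2) := by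
    have : a ^ 3 * d ^ 3 = z ^ 3 := by rw [hz]; ring
    linarith
  have h4 : 2 * C * w ^ 2 * z ^ 2 < z ^ 3 := by
    have := mul_lt_mul_of_pos_right hcon (pow_pos hz0 2)
    linarith
  have hw2 : 0 ≤ w ^ 2 := by positivity
  have h5 : w ^ 2 ≤ z := by nlinarith
  have h6 : (w ^ 2) ^ 2 ≤ z ^ 2 := pow_le_pow_left₀ hw2 h5 2
  have h7 : C * w ^ 6 ≤ C * (w ^ 2 * z ^ 2) := by
    refine mul_le_mul_of_nonneg_left ?_ (by linarith)
    have := mul_le_mul_of_nonneg_left h6 hw2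
    linarith
  have h8 : 0 ≤ w ^ 2 * z ^ 2 := by positivity
  nlinarith

lemma half_le_of_cube_sub_cube {a b : ℝ} (ha : 0 < a) (hb : 0 ≤ b) (h : a ^ 3 = b ^ 3 + 1) :
    1 / 2 ≤ (a ^ 2 - b ^ 2) * a := by
  have hba : b ≤ a := by
    by_contra! hlt
    have := pow_le_pow_left₀ ha.le hlt.le 3
    linarith
  have : (a - b) * (a ^ 2 + a * b + b ^ 2) = 1 := by linear_combination h
  have h2 : a ^ 2 + a * b + b ^ 2 ≤ 2 * (a * (a + b)) := by nlinarith [mul_nonneg ha.le hb]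
  nlinarith [mul_le_mul_of_nonneg_left h2 (sub_nonneg.2 hba)]

/-- The Szemerédi–Trotter bound for non-vertical complex lines, with explicit cube roots. -/
lemma sum_card_linesThrough_le_of_complex (L P : Finset (ℂ × ℂ)) {w a : ℝ} (hw : 0 ≤ w)
    (hw3 : w ^ 3 = L.card) (ha : 0 ≤ a) (ha3 : a ^ 3 = P.card) :
    (∑ p ∈ P, (linesThrough L p).card : ℝ) ≤
      2 * L.card + P.card + 4 * (2 ^ 140) ^ 2 * (w ^ 2 * a ^ 2) := by
  induction hm : P.card using Nat.strong_induction_on generalizing P a with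
  | _ m ih =>
  subst hm
  rcases le_or_gt (P.card ^ 2) L.card with hle | hgt
  · have h := (sum_card_linesThrough_le L P).trans (Nat.add_le_add_right
      (Finset.card_le_card (Finset.biUnion_subset.2 fun p _ => Finset.filter_subset _ L)) _)
    have h1 : (∑ p ∈ P, (linesThrough L p).card : ℝ) ≤ L.card + (P.card : ℝ) ^ 2 := by
      exact_mod_cast h
    have h2 : (P.card : ℝ) ^ 2 ≤ L.card := by exact_mod_cast hle
    have h3 : (0 : ℝ) ≤ 4 * (2 ^ 140) ^ 2 * (w ^ 2 * a ^ 2) := by positivity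
    linarith [Nat.cast_nonneg (α := ℝ) P.card]
  have hPne : P.Nonempty := by
    rw [Finset.nonempty_iff_ne_empty]
    rintro rfl
    simp at hgt
  obtain ⟨q, hq, hmin⟩ := Finset.exists_min_image P (fun p => (linesThrough L p).card) hPne
  have hPpos : (1 : ℝ) ≤ P.card := by exact_mod_cast hPne.card_pos
  have hcard : (P.erase q).card + 1 = P.card := Finset.card_erase_add_one hq
  obtain ⟨b, hb, hb3⟩ : ∃ b : ℝ, 0 ≤ b ∧ b ^ 3 = (P.erase q).card :=
    ⟨((P.erase q).card : ℝ) ^ ((3 : ℕ)⁻¹ : ℝ), by positivity,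
      Real.rpow_inv_natCast_pow (by positivity) (by norm_num)⟩
  have hcard' : ((P.erase q).card : ℝ) + 1 = P.card := by exact_mod_cast hcard
  have ha0 : 0 < a := by
    rcases ha.eq_or_lt with h | h
    · rw [← h] at ha3
      norm_num at ha3
      linarith
    · exact h
  have hwa : w ≤ a ^ 2 := by
    refine le_of_pow_le_pow_left₀ (n := 3) (by norm_num) (by positivity) ?_
    have : (L.card : ℝ) ≤ (P.card : ℝ) ^ 2 := by exact_mod_cast hgt.le
    rw [hw3]
    calc (L.card : ℝ) ≤ (a ^ 3) ^ 2 := by rw [ha3]; exact this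
      _ = (a ^ 2) ^ 3 := by ring
  have hd : ((linesThrough L q).card : ℝ) * a ≤ a + 2 * (2 ^ 140) ^ 2 * w ^ 2 := by
    rcases le_or_gt ((linesThrough L q).card : ℝ) 1 with h1 | h1
    · have : (0 : ℝ) ≤ 2 * (2 ^ 140) ^ 2 * w ^ 2 := by positivity
      nlinarith
    · have h2 := card_le_of_rich L P h1 fun p hp => by exact_mod_cast hmin p hp
      rw [← hw3, ← ha3] at h2
      have := mul_le_of_rich_bound (by norm_num) ha0 hw hwa (by linarith) h2
      linarith
  have hrec := ih (P.erase q).card (by omega) (P.erase q) hb hb3 rfl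
  have hab := half_le_of_cube_sub_cube ha0 hb (by rw [ha3, hb3]; linarith)
  have hd' : ((linesThrough L q).card : ℝ) ≤
      1 + 4 * (2 ^ 140) ^ 2 * (w ^ 2 * (a ^ 2 - b ^ 2)) := by
    refine le_of_mul_le_mul_right (hd.trans ?_) ha0
    have := mul_le_mul_of_nonneg_left hab
      (by positivity : (0 : ℝ) ≤ 4 * (2 ^ 140) ^ 2 * w ^ 2)
    linarith
  rw [← Finset.add_sum_erase P _ hq]
  linarith

open Cardinal in
/-- A countable field of characteristic zero embeds into `ℂ`. -/
lemma nonempty_ringHom_complex_of_countable (F : Type) [Field F] [CharZero F] [Countable F] :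
    Nonempty (F →+* ℂ) := by
  let R := MvPolynomial ℝ F
  let E := AlgebraicClosure (FractionRing R)
  have hF : #F ≤ ℵ₀ := mk_le_aleph0
  have hR : #R = 𝔠 := by
    rw [MvPolynomial.cardinalMk_eq_max, mk_real, sup_eq_right.2 (hF.trans aleph0_le_continuum),
      sup_eq_left.2 aleph0_le_continuum]
  have hQ : #(FractionRing R) = 𝔠 := (mk_fractionRing R).trans hR
  have hE : #E = 𝔠 := by
    refine le_antisymm ?_ ?_
    · have := Algebra.IsAlgebraic.cardinalMk_le_max (FractionRing R) E
      rwa [hQ, max_eq_left aleph0_le_continuum] at this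
    · rw [← hQ]
      exact mk_le_of_injective (algebraMap (FractionRing R) E).injective
  have : CharZero (FractionRing R) :=
    charZero_of_injective_algebraMap (IsFractionRing.injective R (FractionRing R))
  have : CharZero E := charZero_of_injective_algebraMap (algebraMap (FractionRing R) E).injective
  obtain ⟨e⟩ := IsAlgClosed.ringEquiv_of_equiv_of_charZero (K := E) (L := ℂ)
    (by rw [hE]; exact aleph0_lt_continuum) (Cardinal.eq.1 (by rw [hE, mk_complex]))
  exact ⟨e.toRingHom.comp ((algebraMap (FractionRing R) E).comp
    ((algebraMap R (FractionRing R)).comp MvPolynomial.C))⟩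

/-- Finitely many elements of a field of characteristic zero can be moved to `ℂ`, preserving
incidence relations. -/
lemma exists_map_complex {K : Type} [Field K] [CharZero K] (T : Finset K) :
    ∃ g : K → ℂ, Set.InjOn g T ∧
      ∀ x ∈ T, ∀ y ∈ T, ∀ z ∈ T, ∀ w ∈ T, x = y * z + w → g x = g y * g z + g w := by
  let F := Subfield.closure (T : Set K)
  have hmem : ∀ x ∈ T, x ∈ F := fun x hx => Subfield.subset_closure hx
  have : Countable F := by
    rw [← Cardinal.mk_le_aleph0_iff]
    refine (Subfield.cardinalMk_closure_le_max (T : Set K)).trans (max_le ?_ le_rfl)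
    exact Cardinal.mk_le_aleph0
  obtain ⟨φ⟩ := nonempty_ringHom_complex_of_countable F
  let g : K → ℂ := fun x => if h : x ∈ F then φ ⟨x, h⟩ else 0
  have hg : ∀ x (h : x ∈ F), g x = φ ⟨x, h⟩ := fun x h => dif_pos h
  refine ⟨g, ?_, ?_⟩
  · intro x hx y hy hxy
    rw [hg x (hmem x hx), hg y (hmem y hy)] at hxy
    exact congrArg Subtype.val (φ.injective hxy)
  · intro x hx y hy z hz w hw h
    rw [hg x (hmem x hx), hg y (hmem y hy), hg z (hmem z hz), hg w (hmem w hw), ← map_mul,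
      ← map_add]
    exact congrArg φ (Subtype.ext h)

/-- Every finite configuration of points and non-vertical lines over a field of characteristic
zero is realized, with at least as many incidences, over `ℂ`. -/
lemma exists_complex_realization {K : Type} [Field K] [CharZero K] (L P : Finset (K × K)) :
    ∃ L' P' : Finset (ℂ × ℂ), L'.card = L.card ∧ P'.card = P.card ∧
      ∑ p ∈ P, (linesThrough L p).card ≤ ∑ p ∈ P', (linesThrough L' p).card := by
  let T : Finset K := (L ∪ P).image Prod.fst ∪ (L ∪ P).image Prod.snd
  have hT1 : ∀ x ∈ L ∪ P, x.1 ∈ T := fun x hx =>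
    Finset.mem_union_left _ (Finset.mem_image_of_mem _ hx)
  have hT2 : ∀ x ∈ L ∪ P, x.2 ∈ T := fun x hx =>
    Finset.mem_union_right _ (Finset.mem_image_of_mem _ hx)
  obtain ⟨g, hinj, hg⟩ := exists_map_complex T
  let G : K × K → ℂ × ℂ := Prod.map g g
  have hG : Set.InjOn G (L ∪ P : Finset (K × K)) := fun x hx y hy h =>
    Prod.ext (hinj (hT1 x hx) (hT1 y hy) (congrArg Prod.fst h))
      (hinj (hT2 x hx) (hT2 y hy) (congrArg Prod.snd h))
  have hGL : Set.InjOn G L := hG.mono (Finset.coe_subset.2 Finset.subset_union_left)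
  have hGP : Set.InjOn G P := hG.mono (Finset.coe_subset.2 Finset.subset_union_right)
  refine ⟨L.image G, P.image G, Finset.card_image_of_injOn hGL, Finset.card_image_of_injOn hGP, ?_⟩
  rw [Finset.sum_image hGP]
  refine Finset.sum_le_sum fun p hp => ?_
  rw [← Finset.card_image_of_injOn (s := linesThrough L p) (f := G)
    (hGL.mono (Finset.coe_subset.2 (Finset.filter_subset _ _)))]
  refine Finset.card_le_card fun x hx => ?_
  obtain ⟨a, ha, rfl⟩ := Finset.mem_image.1 hx
  rw [mem_linesThrough] at ha ⊢
  have hpU := Finset.mem_union_right L hp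
  have haU := Finset.mem_union_left P ha.1
  exact ⟨Finset.mem_image_of_mem _ ha.1,
    hg _ (hT2 p hpU) _ (hT1 a haU) _ (hT1 p hpU) _ (hT2 a haU) ha.2⟩

/-- After a shear, finitely many lines are graphs. -/
lemma exists_graph_realization {K : Type} [Field K] [CharZero K] (P : Finset (K × K))
    (L : Finset (Set (K × K))) (hL : ∀ l ∈ L, IsLine K l) :
    ∃ L' P' : Finset (K × K), L'.card = L.card ∧ P'.card = P.card ∧
      ((P ×ˢ L).filter fun pl => pl.1 ∈ pl.2).card ≤ ∑ p ∈ P', (linesThrough L' p).card := by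
  choose! a b c hne hl using hL
  obtain ⟨k, hk⟩ := Infinite.exists_notMem_finset (L.image fun l => b l / a l)
  have hden : ∀ l ∈ L, b l - k * a l ≠ 0 := by
    intro l hlL h
    by_cases ha : a l = 0
    · rw [ha, mul_zero, sub_zero] at h
      exact hne l hlL (by rw [ha, h])
    · refine hk (Finset.mem_image.2 ⟨l, hlL, ?_⟩)
      rw [div_eq_iff ha]
      exact sub_eq_zero.1 h
  let τ : K × K → K × K := fun p => (p.1 + k * p.2, p.2)
  let code : Set (K × K) → K × K := fun l =>
    (-a l / (b l - k * a l), -c l / (b l - k * a l))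
  have hτ : Function.Injective τ := by
    intro p q h
    simp only [τ, Prod.mk.injEq] at h
    have h1 := h.1
    rw [h.2] at h1
    exact Prod.ext (add_right_cancel h1) h.2
  have hcode : ∀ l ∈ L, ∀ p, p ∈ l ↔ OnGraph (τ p) (code l) := by
    intro l hlL p
    have hd := hden l hlL
    have hmem : p ∈ l ↔ a l * p.1 + b l * p.2 + c l = 0 := by
      conv_lhs => rw [hl l hlL]
      rfl
    have hon : OnGraph (τ p) (code l) ↔
        p.2 * (b l - k * a l) = -a l * (p.1 + k * p.2) + -c l := by
      simp only [OnGraph, τ, code]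
      rw [← eq_div_iff hd, add_div, mul_div_right_comm]
    rw [hmem, hon]
    constructor <;> intro h <;> linear_combination h
  have hinj : Set.InjOn code L := by
    intro l hlL l' hlL' h
    ext p
    rw [hcode l hlL, hcode l' hlL', h]
  refine ⟨L.image code, P.image τ, Finset.card_image_of_injOn hinj,
    Finset.card_image_of_injective _ hτ, ?_⟩
  rw [Finset.sum_image hτ.injOn, Finset.card_filter, Finset.sum_product]
  refine Finset.sum_le_sum fun p _ => ?_
  rw [← Finset.card_filter, ← Finset.card_image_of_injOn (f := code)
    (hinj.mono (Finset.coe_subset.2 (Finset.filter_subset _ _)))]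
  refine Finset.card_le_card fun x hx => ?_
  obtain ⟨l, hlx, rfl⟩ := Finset.mem_image.1 hx
  obtain ⟨hlL, hpl⟩ := Finset.mem_filter.1 hlx
  exact mem_linesThrough.2 ⟨Finset.mem_image_of_mem _ hlL, (hcode l hlL p).1 hpl⟩

/-- Szemerédi–Trotter over characteristic-zero fields. -/
theorem stmt3 :
    ∃ C : ℝ, 0 < C ∧
      ∀ (K : Type) [Field K] [CharZero K],
        ∀ (P : Finset (K × K)) (L : Finset (Set (K × K))),
          (∀ l ∈ L, IsLine K l) →
          (((P ×ˢ L).filter (fun pl => pl.1 ∈ pl.2)).card : ℝ) ≤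
            C * ((P.card : ℝ) ^ ((2 : ℝ) / 3) * (L.card : ℝ) ^ ((2 : ℝ) / 3)
              + P.card + L.card) := by
  refine ⟨4 * (2 ^ 140) ^ 2, by positivity, fun K _ _ P L hL => ?_⟩
  obtain ⟨L₁, P₁, hL₁, hP₁, h₁⟩ := exists_graph_realization P L hL
  obtain ⟨L₂, P₂, hL₂, hP₂, h₂⟩ := exists_complex_realization L₁ P₁
  have hroot : ∀ n : ℕ, ((n : ℝ) ^ ((3 : ℕ)⁻¹ : ℝ)) ^ 3 = n := fun n =>
    Real.rpow_inv_natCast_pow (by positivity) (by norm_num)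
  have hsq : ∀ n : ℕ, ((n : ℝ) ^ ((3 : ℕ)⁻¹ : ℝ)) ^ 2 = (n : ℝ) ^ ((2 : ℝ) / 3) := fun n => by
    rw [← Real.rpow_mul_natCast (by positivity)]
    norm_num
  have h := sum_card_linesThrough_le_of_complex L₂ P₂ (by positivity) (hroot L₂.card)
    (by positivity) (hroot P₂.card)
  rw [hsq, hsq, hL₂, hP₂, hL₁, hP₁] at h
  have h' : (((P ×ˢ L).filter (fun pl => pl.1 ∈ pl.2)).card : ℝ) ≤
      ∑ p ∈ P₂, ((linesThrough L₂ p).card : ℝ) := by exact_mod_cast h₁.trans h₂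
  refine (h'.trans h).trans ?_
  have hP0 : (0 : ℝ) ≤ P.card := by positivity
  have hL0 : (0 : ℝ) ≤ L.card := by positivity
  norm_num
  linarith
end

section
/- Beck's theorem over characteristic-zero fields: there exist absolute constants c, c' > 0 such that for any field K of characteristic zero and any finite set P of points in K², letting L be the set of all lines in K² passing through at least two points of P, either some line in L contains at least c·|P| points of P, or |L| ≥ c'·|P|². -/
open scoped Classical

/-- A polynomial whose vanishing expresses collinearity of three points of the plane. -/
def collinearDet {K : Type} [Field K] (p q r : K × K) : K :=
  (q.1 - p.1) * (r.2 - p.2) - (q.2 - p.2) * (r.1 - p.1)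

/-- The line through two distinct points. -/
def lineThrough {K : Type} [Field K] (p q : K × K) : Set (K × K) :=
  {r | collinearDet p q r = 0}

/-- Shrinking by the factor `1 - s` in the direction of a unit vector `u`. -/
lemma norm_sq_sub_smul_inner {E : Type*} [NormedAddCommGroup E] [InnerProductSpace ℂ E]
    (u x : E) (hu : ‖u‖ = 1) (s : ℝ) :
    ‖x - ((s : ℂ) * inner ℂ u x) • u‖ ^ 2
      = ‖x‖ ^ 2 - (2 * s - s ^ 2) * ‖inner ℂ u x‖ ^ 2 := by
  rw [@norm_sub_sq ℂ, inner_smul_right, norm_smul, hu, norm_mul, Complex.norm_real,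
    ← inner_conj_symm x u, mul_assoc, Complex.mul_conj, Complex.normSq_eq_norm_sq]
  have h : RCLike.re ((s : ℂ) * ((‖inner ℂ u x‖ ^ 2 : ℝ) : ℂ)) = s * ‖inner ℂ u x‖ ^ 2 := by
    rw [← Complex.ofReal_mul]; exact Complex.ofReal_re _
  rw [h, mul_one, mul_pow, Real.norm_eq_abs, sq_abs]
  ring

/-- If the functional `B ↦ |det B| ^ (2 |P|) / ∏ ‖B v‖ ^ 6` is bounded, then some invertible `B`
puts the vectors in approximately isotropic position. -/
lemma exists_almost_isotropic {E α : Type*} [NormedAddCommGroup E] [InnerProductSpace ℂ E]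
    [FiniteDimensional ℂ E] (P : Finset α) (v : α → E) (hv : ∀ p ∈ P, v p ≠ 0) (C : ℝ)
    (hC : ∀ B : E →ₗ[ℂ] E, ‖LinearMap.det B‖ ^ P.card ≤ C * ∏ p ∈ P, ‖B (v p)‖ ^ 3) :
    ∃ B : E →ₗ[ℂ] E, Function.Injective B ∧ ∀ u : E, ‖u‖ = 1 →
      ∑ p ∈ P, ‖inner ℂ u (B (v p))‖ ^ 2 / ‖B (v p)‖ ^ 2 ≤ 3 / 8 * (P.card : ℝ) := by
  rcases P.eq_empty_or_nonempty with rfl | hP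
  · exact ⟨LinearMap.id, fun _ _ h => h, fun u _ => by simp⟩
  have hinj : ∀ B : E →ₗ[ℂ] E, LinearMap.det B ≠ 0 → Function.Injective B := fun B hB =>
    LinearMap.ker_eq_bot.1 (not_not.1 fun h => hB (LinearMap.det_eq_zero_iff_ker_ne_bot.2 h))
  have hpos : ∀ B : E →ₗ[ℂ] E, LinearMap.det B ≠ 0 → ∀ p ∈ P, 0 < ‖B (v p)‖ := fun B hB p hp =>
    norm_pos_iff.2 fun h => hv p hp (hinj B hB (by rw [h, map_zero]))
  set F : (E →ₗ[ℂ] E) → ℝ := fun B =>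
    (‖LinearMap.det B‖ ^ 2) ^ P.card / ∏ p ∈ P, (‖B (v p)‖ ^ 2) ^ 3 with hF
  have hFpos : ∀ B : E →ₗ[ℂ] E, LinearMap.det B ≠ 0 → 0 < F B := fun B hB => by
    have := norm_pos_iff.2 hB
    exact div_pos (by positivity) (Finset.prod_pos fun p hp => by
      have := hpos B hB p hp
      positivity)
  have hbdd : BddAbove (F '' {B | LinearMap.det B ≠ 0}) := by
    refine ⟨C ^ 2, ?_⟩
    rintro _ ⟨B, hB, rfl⟩
    rw [hF]
    simp only
    rw [div_le_iff₀ (Finset.prod_pos fun p hp => by have := hpos B hB p hp; positivity)]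
    have h1 := pow_le_pow_left₀ (by positivity) (hC B) 2
    rw [mul_pow, ← Finset.prod_pow] at h1
    convert h1 using 1
    · ring
    · congr 1
      exact Finset.prod_congr rfl fun p _ => by ring
  have hmem : F LinearMap.id ∈ F '' {B | LinearMap.det B ≠ 0} := ⟨_, by simp, rfl⟩
  have hSpos : 0 < sSup (F '' {B | LinearMap.det B ≠ 0}) :=
    (hFpos LinearMap.id (by simp)).trans_le (le_csSup hbdd hmem)
  obtain ⟨_, ⟨B, hB, rfl⟩, hlt⟩ := exists_lt_of_lt_csSup ⟨_, hmem⟩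
    (show sSup (F '' {B | LinearMap.det B ≠ 0}) / (1001 / 1000) <
      sSup (F '' {B | LinearMap.det B ≠ 0}) from div_lt_self hSpos (by norm_num))
  refine ⟨B, hinj B hB, fun u hu => ?_⟩
  by_contra! hcon
  set a : α → ℝ := fun p => ‖inner ℂ u (B (v p))‖ ^ 2 / ‖B (v p)‖ ^ 2 with ha
  set f : Module.Dual ℂ E := (-(1 / 36 : ℝ) : ℂ) • (innerSL ℂ u : E →ₗ[ℂ] ℂ) with hf
  set B' : E →ₗ[ℂ] E := LinearMap.transvection f u ∘ₗ B with hB'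
  have hdet : LinearMap.det B' = ((35 / 36 : ℝ) : ℂ) * LinearMap.det B := by
    rw [hB', LinearMap.det_comp, LinearMap.transvection.det]
    congr 1
    simp [hf, hu]
    norm_num
  have hdet0 : LinearMap.det B' ≠ 0 := by
    rw [hdet]
    exact mul_ne_zero (by norm_num) hB
  have hnorm : ∀ p ∈ P, ‖B' (v p)‖ ^ 2 = ‖B (v p)‖ ^ 2 * (1 - 71 / 1296 * a p) := by
    intro p hp
    have h0 := hpos B hB p hp
    have h1 : B' (v p) = B (v p) - (((1 / 36 : ℝ) : ℂ) * inner ℂ u (B (v p))) • u := by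
      simp [hB', hf, LinearMap.transvection.apply, sub_eq_add_neg, neg_smul]
    rw [h1, norm_sq_sub_smul_inner u _ hu, ha]
    field_simp
    ring
  have hprod : ∏ p ∈ P, (‖B' (v p)‖ ^ 2) ^ 3 ≤
      (∏ p ∈ P, (‖B (v p)‖ ^ 2) ^ 3) * Real.exp (-(71 / 1296 * 9 / 8) * P.card) := by
    calc ∏ p ∈ P, (‖B' (v p)‖ ^ 2) ^ 3
        ≤ ∏ p ∈ P, ((‖B (v p)‖ ^ 2) ^ 3 * Real.exp (-(71 / 1296 * 3) * a p)) := by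
          refine Finset.prod_le_prod (fun p _ => by positivity) fun p hp => ?_
          have h1 : ‖B' (v p)‖ ^ 2 ≤ ‖B (v p)‖ ^ 2 * Real.exp (-(71 / 1296) * a p) := by
            rw [hnorm p hp]
            gcongr
            linarith [Real.add_one_le_exp (-(71 / 1296) * a p)]
          refine (pow_le_pow_left₀ (by positivity) h1 3).trans_eq ?_
          rw [mul_pow, ← Real.exp_nat_mul]
          congr 2
          push_cast
          ring
      _ = (∏ p ∈ P, (‖B (v p)‖ ^ 2) ^ 3) * Real.exp (-(71 / 1296 * 3) * ∑ p ∈ P, a p) := by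
          rw [Finset.prod_mul_distrib, ← Real.exp_sum, Finset.mul_sum]
      _ ≤ _ := by
          gcongr ?_ * Real.exp ?_
          linarith
  have hfac : (1001 / 1000 : ℝ) ≤
      ((35 / 36) ^ 2) ^ P.card / Real.exp (-(71 / 1296 * 9 / 8) * P.card) := by
    have h1 : Real.exp (-(71 / 1296 * 9 / 8) * P.card)
        = (Real.exp (71 / 1296 * 9 / 8))⁻¹ ^ P.card := by
      rw [← Real.exp_neg, ← Real.exp_nat_mul, mul_comm]
    rw [h1, ← div_pow, div_inv_eq_mul]
    have h2 : (1001 / 1000 : ℝ) ≤ (35 / 36) ^ 2 * Real.exp (71 / 1296 * 9 / 8) := by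
      nlinarith [Real.add_one_le_exp (71 / 1296 * 9 / 8 : ℝ)]
    exact h2.trans (le_self_pow₀ (le_trans (by norm_num) h2) hP.card_ne_zero)
  have hBB' : 1001 / 1000 * F B ≤ F B' := by
    have hd : 0 < ∏ p ∈ P, (‖B' (v p)‖ ^ 2) ^ 3 :=
      Finset.prod_pos fun p hp => by have := hpos B' hdet0 p hp; positivity
    calc 1001 / 1000 * F B
        ≤ ((35 / 36) ^ 2) ^ P.card / Real.exp (-(71 / 1296 * 9 / 8) * P.card) * F B :=
          mul_le_mul_of_nonneg_right hfac (hFpos B hB).le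
      _ = (‖LinearMap.det B'‖ ^ 2) ^ P.card /
          ((∏ p ∈ P, (‖B (v p)‖ ^ 2) ^ 3) * Real.exp (-(71 / 1296 * 9 / 8) * P.card)) := by
          rw [hdet, norm_mul, Complex.norm_real, Real.norm_of_nonneg (by norm_num), hF,
            div_mul_div_comm, ← mul_pow, ← mul_pow, mul_comm (Real.exp _)]
      _ ≤ F B' := by
          exact div_le_div_of_nonneg_left (by positivity) hd hprod
  have hle := le_csSup hbdd ⟨B', hdet0, rfl⟩
  rw [div_lt_iff₀ (by norm_num)] at hlt
  linarith

/-- Vectors spanning a space of dimension at most two have a large sum of squared inner products. -/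
lemma card_sq_le_sum_inner_sq {E α : Type*} [NormedAddCommGroup E] [InnerProductSpace ℂ E]
    [FiniteDimensional ℂ E] (W : Submodule ℂ E) (hW : Module.finrank ℂ W ≤ 2)
    (S : Finset α) (w : α → E) (hw : ∀ p ∈ S, ‖w p‖ = 1) (hmem : ∀ p ∈ S, w p ∈ W) :
    (S.card : ℝ) ^ 2 ≤ 2 * ∑ p ∈ S, ∑ q ∈ S, ‖inner ℂ (w p) (w q)‖ ^ 2 := by
  set e := stdOrthonormalBasis ℂ W with he
  set d := Module.finrank ℂ W with hd
  set x : Fin d → α → ℂ := fun k p => inner ℂ (e k : E) (w p) with hx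
  have hin : ∀ p ∈ S, ∀ q ∈ S, inner ℂ (w p) (w q) = ∑ k, star (x k p) * x k q := by
    intro p hp q hq
    have := e.sum_inner_mul_inner (⟨w p, hmem p hp⟩ : W) ⟨w q, hmem q hq⟩
    simp only [Submodule.coe_inner] at this
    rw [← this]
    refine Finset.sum_congr rfl fun k _ => ?_
    rw [hx]
    simp only [Complex.star_def, inner_conj_symm]
  have hcard : (S.card : ℝ) = ∑ k, ∑ p ∈ S, ‖x k p‖ ^ 2 := by
    rw [Finset.sum_comm, Finset.cast_card]
    refine Finset.sum_congr rfl fun p hp => ?_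
    have h1 := hin p hp p hp
    rw [inner_self_eq_norm_sq_to_K, hw p hp] at h1
    have h2 : ∀ k, star (x k p) * x k p = ((‖x k p‖ ^ 2 : ℝ) : ℂ) := fun k => by
      rw [Complex.star_def, ← Complex.normSq_eq_conj_mul_self, Complex.normSq_eq_norm_sq]
    simp only [h2] at h1
    rw [← Complex.ofReal_sum] at h1
    have h3 := congrArg Complex.re h1
    rw [Complex.ofReal_re] at h3
    simpa using h3
  have hsum : ((∑ p ∈ S, ∑ q ∈ S, ‖inner ℂ (w p) (w q)‖ ^ 2 : ℝ) : ℂ)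
      = ((∑ k, ∑ l, ‖∑ p ∈ S, x k p * star (x l p)‖ ^ 2 : ℝ) : ℂ) := by
    have h2 : ∀ z : ℂ, ((‖z‖ ^ 2 : ℝ) : ℂ) = z * star z := fun z => by
      rw [Complex.star_def, Complex.mul_conj, Complex.normSq_eq_norm_sq]
    simp only [Complex.ofReal_sum, h2]
    calc ∑ p ∈ S, ∑ q ∈ S, inner ℂ (w p) (w q) * star (inner ℂ (w p) (w q))
        = ∑ p ∈ S, ∑ q ∈ S, ∑ k, ∑ l, star (x k p) * x k q * (x l p * star (x l q)) := by
          refine Finset.sum_congr rfl fun p hp => Finset.sum_congr rfl fun q hq => ?_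
          rw [hin p hp q hq, star_sum, Finset.sum_mul_sum]
          simp
      _ = ∑ k, ∑ l, ∑ q ∈ S, ∑ p ∈ S, star (x k p) * x k q * (x l p * star (x l q)) := by
          rw [Finset.sum_comm]
          simp only [Finset.sum_comm (s := S) (t := Finset.univ)]
      _ = _ := by
          refine Finset.sum_congr rfl fun k _ => Finset.sum_congr rfl fun l _ => ?_
          rw [star_sum, Finset.sum_mul_sum]
          refine Finset.sum_congr rfl fun q _ => Finset.sum_congr rfl fun p _ => ?_
          simp
          ring
  have hdiag : ∑ k, (∑ p ∈ S, ‖x k p‖ ^ 2) ^ 2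
      ≤ ∑ k, ∑ l, ‖∑ p ∈ S, x k p * star (x l p)‖ ^ 2 := by
    refine Finset.sum_le_sum fun k _ => ?_
    refine le_trans (le_of_eq ?_) (Finset.single_le_sum
      (f := fun l => ‖∑ p ∈ S, x k p * star (x l p)‖ ^ 2) (fun l _ => by positivity)
      (Finset.mem_univ k))
    have : ∑ p ∈ S, x k p * star (x k p) = ((∑ p ∈ S, ‖x k p‖ ^ 2 : ℝ) : ℂ) := by
      rw [Complex.ofReal_sum]
      refine Finset.sum_congr rfl fun p _ => ?_
      rw [Complex.star_def, Complex.mul_conj, Complex.normSq_eq_norm_sq]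
    simp only [this, Complex.norm_real, Real.norm_eq_abs, sq_abs]
  rw [Complex.ofReal_inj.1 hsum, hcard]
  refine (sq_sum_le_card_mul_sum_sq (s := Finset.univ)
    (f := fun k => ∑ p ∈ S, ‖x k p‖ ^ 2)).trans ?_
  rw [Finset.card_univ, Fintype.card_fin]
  have : (d : ℝ) ≤ 2 := by exact_mod_cast hW
  have h0 : 0 ≤ ∑ k, (∑ p ∈ S, ‖x k p‖ ^ 2) ^ 2 := by positivity
  nlinarith

/-- Every finite family contains a subfamily satisfying a Hadamard-type bound, whose complement
contains no linearly independent triple. -/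
lemma exists_subset_det_bound {E α : Type*} [DecidableEq α] [NormedAddCommGroup E]
    [InnerProductSpace ℂ E]
    [FiniteDimensional ℂ E] (b : Module.Basis (Fin 3) ℂ E) (P : Finset α) (v : α → E) :
    ∃ Q ⊆ P, (∃ C : ℝ, 0 ≤ C ∧ ∀ B : E →ₗ[ℂ] E,
        ‖LinearMap.det B‖ ^ Q.card ≤ C * ∏ p ∈ Q, ‖B (v p)‖ ^ 3) ∧
      ∀ p ∈ P \ Q, ∀ q ∈ P \ Q, ∀ r ∈ P \ Q, b.det ![v p, v q, v r] = 0 := by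
  set good : Finset α → Prop := fun Q => ∃ C : ℝ, 0 ≤ C ∧ ∀ B : E →ₗ[ℂ] E,
    ‖LinearMap.det B‖ ^ Q.card ≤ C * ∏ p ∈ Q, ‖B (v p)‖ ^ 3 with hgood
  have hcont : Continuous b.det := by
    change Continuous fun v : Fin 3 → E => (b.toMatrix v).det
    exact Continuous.matrix_det (continuous_matrix fun i j =>
      (b.coord i).continuous_of_finiteDimensional.comp (continuous_apply j))
  obtain ⟨D, hD0, hD⟩ := b.det.exists_bound_of_continuous hcont
  obtain ⟨Q, hQ, hmax⟩ := (P.powerset.filter good).exists_max_image Finset.card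
    ⟨∅, Finset.mem_filter.2 ⟨Finset.empty_mem_powerset P, 1, zero_le_one, fun B => by simp⟩⟩
  rw [Finset.mem_filter, Finset.mem_powerset] at hQ
  refine ⟨Q, hQ.1, hQ.2, fun p hp q hq r hr => ?_⟩
  by_contra hne
  rw [Finset.mem_sdiff] at hp hq hr
  have hpq : p ≠ q := fun h => hne (b.det.map_eq_zero_of_eq _ (i := 0) (j := 1)
    (by simp [h]) (by decide))
  have hpr : p ≠ r := fun h => hne (b.det.map_eq_zero_of_eq _ (i := 0) (j := 2)
    (by simp [h]) (by decide))
  have hqr : q ≠ r := fun h => hne (b.det.map_eq_zero_of_eq _ (i := 1) (j := 2)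
    (by simp [h]) (by decide))
  have hr' : r ∉ Q := hr.2
  have hq' : q ∉ insert r Q := by simp [hqr, hq.2]
  have hp' : p ∉ insert q (insert r Q) := by simp [hpq, hpr, hp.2]
  have hcard : (insert p (insert q (insert r Q))).card = Q.card + 3 := by
    rw [Finset.card_insert_of_notMem hp', Finset.card_insert_of_notMem hq',
      Finset.card_insert_of_notMem hr']
  have hmem : insert p (insert q (insert r Q)) ∈ P.powerset.filter good := by
    rw [Finset.mem_filter, Finset.mem_powerset]
    refine ⟨by grind, ?_⟩
    obtain ⟨C, hC0, hC⟩ := hQ.2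
    set δ := ‖b.det ![v p, v q, v r]‖ with hδ
    have hδ0 : 0 < δ := norm_pos_iff.2 hne
    refine ⟨C * (D / δ) ^ 3, by positivity, fun B => ?_⟩
    have h1 : ‖LinearMap.det B‖ ≤ D / δ * (‖B (v p)‖ * ‖B (v q)‖ * ‖B (v r)‖) := by
      have h2 := hD (B ∘ ![v p, v q, v r])
      rw [b.det_comp, norm_mul, Fin.prod_univ_three] at h2
      rw [div_mul_eq_mul_div, le_div_iff₀ hδ0]
      simpa using h2
    rw [hcard, pow_add, Finset.prod_insert hp', Finset.prod_insert hq', Finset.prod_insert hr']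
    calc _ ≤ (C * ∏ p ∈ Q, ‖B (v p)‖ ^ 3) *
          (D / δ * (‖B (v p)‖ * ‖B (v q)‖ * ‖B (v r)‖)) ^ 3 := by
          gcongr
          exact hC B
      _ = _ := by ring
  have := hmax _ hmem
  omega

open Cardinal in
/-- A countable field of characteristic zero embeds into `ℂ`. -/
lemma exists_ringHom_complex (F : Type) [Field F] [CharZero F] (hF : #F ≤ ℵ₀) :
    Nonempty (F →+* ℂ) := by
  let R := FractionRing (MvPolynomial ℝ F)
  let M := AlgebraicClosure R
  have : CharZero R :=
    charZero_of_injective_algebraMap (R := MvPolynomial ℝ F) (IsFractionRing.injective _ _)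
  have : CharZero M := charZero_of_injective_algebraMap (algebraMap R M).injective
  have hR : #R = 𝔠 := by
    rw [FractionRing.cardinalMk, MvPolynomial.cardinalMk_eq_max, mk_real,
      max_eq_right (hF.trans aleph0_le_continuum), max_eq_left aleph0_le_continuum]
  have hM : #M = 𝔠 := by
    refine le_antisymm ?_ (hR ▸ mk_le_of_injective (algebraMap R M).injective)
    refine (Algebra.IsAlgebraic.cardinalMk_le_max R M).trans ?_
    rw [hR, max_eq_left aleph0_le_continuum]
  obtain ⟨e⟩ := IsAlgClosed.ringEquiv_of_equiv_of_charZero (K := M) (L := ℂ)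
    (by rw [hM]; exact aleph0_lt_continuum) (by rw [← Cardinal.eq, hM, mk_complex])
  exact ⟨(e : M →+* ℂ).comp ((algebraMap R M).comp
    ((algebraMap (MvPolynomial ℝ F) R).comp MvPolynomial.C))⟩


open Cardinal in
/-- A finite planar point set over a field of characteristic zero can be copied into `ℂ²` with
the same collinear triples. -/
lemma exists_complex_copy {K : Type} [Field K] [CharZero K] (P : Finset (K × K)) :
    ∃ f : K × K → ℂ × ℂ, (∀ p ∈ P, ∀ q ∈ P, f p = f q → p = q) ∧
      ∀ p ∈ P, ∀ q ∈ P, ∀ r ∈ P, collinearDet (f p) (f q) (f r) = 0 ↔ collinearDet p q r = 0 := by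
  set s : Set K := ↑(P.image Prod.fst ∪ P.image Prod.snd) with hs
  set F := Subfield.closure s with hF
  have h1 : ∀ p ∈ P, p.1 ∈ F := fun p hp => Subfield.subset_closure
    (by simpa [hs] using Or.inl ⟨p.2, hp⟩)
  have h2 : ∀ p ∈ P, p.2 ∈ F := fun p hp => Subfield.subset_closure
    (by simpa [hs] using Or.inr ⟨p.1, hp⟩)
  have hcard : #F ≤ ℵ₀ := (Subfield.cardinalMk_closure_le_max s).trans
    (max_le (P.image Prod.fst ∪ P.image Prod.snd).countable_toSet.le_aleph0 le_rfl)
  obtain ⟨ψ⟩ := exists_ringHom_complex F hcard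
  set φ : K → ℂ := fun x => if h : x ∈ F then ψ ⟨x, h⟩ else 0 with hφ
  have hφF : ∀ x : F, φ x = ψ x := fun x => by simp [hφ]
  have hlift : ∀ p ∈ P, ∃ x y : F, p = ((x : K), (y : K)) := fun p hp =>
    ⟨⟨p.1, h1 p hp⟩, ⟨p.2, h2 p hp⟩, rfl⟩
  refine ⟨fun p => (φ p.1, φ p.2), fun p hp q hq h => ?_, fun p hp q hq r hr => ?_⟩
  · obtain ⟨x, y, rfl⟩ := hlift p hp
    obtain ⟨x', y', rfl⟩ := hlift q hq
    simp only [hφF, Prod.mk.injEq] at h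
    rw [ψ.injective h.1, ψ.injective h.2]
  · obtain ⟨x, y, rfl⟩ := hlift p hp
    obtain ⟨x', y', rfl⟩ := hlift q hq
    obtain ⟨x'', y'', rfl⟩ := hlift r hr
    simp only [collinearDet, hφF]
    rw [← map_sub, ← map_sub, ← map_sub, ← map_sub, ← map_mul, ← map_mul, ← map_sub, map_eq_zero,
      ← Subtype.coe_inj]
    push_cast
    rfl

lemma exists_affine_combination {K : Type} [Field K] {p q r : K × K} (hpq : p ≠ q)
    (h : collinearDet p q r = 0) :
    ∃ t : K, r.1 = (1 - t) * p.1 + t * q.1 ∧ r.2 = (1 - t) * p.2 + t * q.2 := by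
  unfold collinearDet at h
  by_cases h1 : q.1 - p.1 = 0
  · have h2 : q.2 - p.2 ≠ 0 := fun h2 =>
      hpq (Prod.ext (sub_eq_zero.1 h1).symm (sub_eq_zero.1 h2).symm)
    refine ⟨(r.2 - p.2) / (q.2 - p.2), ?_, ?_⟩ <;> field_simp
    · linear_combination -h
    · ring
  · refine ⟨(r.1 - p.1) / (q.1 - p.1), ?_, ?_⟩ <;> field_simp
    · ring
    · linear_combination h

lemma isLine_lineThrough {K : Type} [Field K] {p q : K × K} (hpq : p ≠ q) :
    IsLine K (lineThrough p q) := by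
  refine ⟨-(q.2 - p.2), q.1 - p.1, (q.2 - p.2) * p.1 - (q.1 - p.1) * p.2, fun h => hpq ?_, ?_⟩
  · simp only [Prod.mk.injEq, neg_eq_zero, sub_eq_zero] at h
    exact Prod.ext h.2.symm h.1.symm
  · ext r
    simp only [lineThrough, collinearDet, Set.mem_ofPred_eq]
    ring_nf

lemma left_mem_lineThrough {K : Type} [Field K] (p q : K × K) : p ∈ lineThrough p q := by
  simp [lineThrough, collinearDet]

lemma right_mem_lineThrough {K : Type} [Field K] (p q : K × K) : q ∈ lineThrough p q := by
  simp only [lineThrough, collinearDet, Set.mem_ofPred_eq]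
  ring

lemma IsLine.eq_lineThrough {K : Type} [Field K] {l : Set (K × K)} (hl : IsLine K l)
    {p q : K × K} (hpq : p ≠ q) (hp : p ∈ l) (hq : q ∈ l) : lineThrough p q = l := by
  obtain ⟨a, b, c, hab, rfl⟩ := hl
  simp only [Set.mem_ofPred_eq] at hp hq
  ext r
  simp only [Set.mem_ofPred_eq]
  refine ⟨fun h => ?_, fun h => ?_⟩
  · obtain ⟨t, h1, h2⟩ := exists_affine_combination hpq h
    rw [h1, h2]
    linear_combination (1 - t) * hp + t * hq
  · change collinearDet p q r = 0
    have h1 : a * collinearDet p q r = 0 := by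
      unfold collinearDet
      linear_combination (r.2 - p.2) * (hq - hp) - (q.2 - p.2) * (h - hp)
    have h2 : b * collinearDet p q r = 0 := by
      unfold collinearDet
      linear_combination (q.1 - p.1) * (h - hp) - (r.1 - p.1) * (hq - hp)
    by_contra h0
    exact hab (Prod.ext ((mul_eq_zero.1 h1).resolve_right h0) ((mul_eq_zero.1 h2).resolve_right h0))

lemma exists_isLine_of_collinear {K : Type} [Field K] (R : Finset (K × K))
    (hR : ∀ p ∈ R, ∀ q ∈ R, ∀ r ∈ R, collinearDet p q r = 0) :
    ∃ l : Set (K × K), IsLine K l ∧ ∀ r ∈ R, r ∈ l := by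
  by_cases h : ∃ p ∈ R, ∃ q ∈ R, p ≠ q
  · obtain ⟨p, hp, q, hq, hpq⟩ := h
    exact ⟨_, isLine_lineThrough hpq, fun r hr => hR p hp q hq r hr⟩
  · push Not at h
    rcases R.eq_empty_or_nonempty with rfl | ⟨p, hp⟩
    · exact ⟨_, ⟨1, 0, 0, by simp, rfl⟩, by simp⟩
    · refine ⟨_, ⟨1, 0, -p.1, by simp, rfl⟩, fun r hr => ?_⟩
      simp [h r hr p hp]

/-- The connecting lines of a finite set are the lines through its pairs of distinct points. -/
lemma natCard_connecting_lines {K : Type} [Field K] (P : Finset (K × K)) :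
    Nat.card {l : Set (K × K) // IsLine K l ∧ ∃ p ∈ P, ∃ q ∈ P, p ≠ q ∧ p ∈ l ∧ q ∈ l}
      = (P.offDiag.image fun x => lineThrough x.1 x.2).card := by
  rw [← Nat.card_eq_finsetCard]
  refine Nat.card_congr (Equiv.subtypeEquivRight fun l => ?_)
  simp only [Finset.mem_image, Finset.mem_offDiag]
  refine ⟨fun ⟨hl, p, hp, q, hq, hpq, hpl, hql⟩ =>
    ⟨(p, q), ⟨hp, hq, hpq⟩, hl.eq_lineThrough hpq hpl hql⟩, ?_⟩
  rintro ⟨⟨p, q⟩, ⟨hp, hq, hpq⟩, rfl⟩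
  exact ⟨isLine_lineThrough hpq, p, hp, q, hq, hpq, left_mem_lineThrough p q,
    right_mem_lineThrough p q⟩

lemma sum_offDiag_eq_sub {α : Type*} (S : Finset α) (g : α → α → ℝ) :
    ∑ x ∈ S.offDiag, g x.1 x.2 = ∑ p ∈ S, ∑ q ∈ S, g p q - ∑ p ∈ S, g p p := by
  rw [← Finset.sum_product', ← Finset.diag_union_offDiag,
    Finset.sum_union (Finset.disjoint_diag_offDiag S), Finset.sum_diag]
  ring

/-- Double counting pairs of points along the lines through them. -/
lemma card_sq_le_of_isotropic {K E : Type} [Field K] [NormedAddCommGroup E]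
    [InnerProductSpace ℂ E] [FiniteDimensional ℂ E] (Q : Finset (K × K)) (w : K × K → E)
    (hw : ∀ p ∈ Q, ‖w p‖ = 1)
    (hsum : ∀ p ∈ Q, ∑ q ∈ Q, ‖inner ℂ (w p) (w q)‖ ^ 2 ≤ 3 / 8 * (Q.card : ℝ))
    (hline : ∀ p ∈ Q, ∀ q ∈ Q, p ≠ q → ∃ W : Submodule ℂ E, Module.finrank ℂ W ≤ 2 ∧
      ∀ r ∈ Q, collinearDet p q r = 0 → w r ∈ W) :
    (Q.card : ℝ) ^ 2 ≤ 84 * ((Q.offDiag.image fun x => lineThrough x.1 x.2).card : ℝ) := by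
  set L := Q.offDiag.image fun x => lineThrough x.1 x.2 with hL
  set g : K × K → K × K → ℝ := fun p q => ‖inner ℂ (w p) (w q)‖ ^ 2 with hg
  have hg1 : ∀ S ⊆ Q, ∑ p ∈ S, g p p = S.card := fun S hS => by
    rw [Finset.cast_card]
    refine Finset.sum_congr rfl fun p hp => ?_
    simp [hg, inner_self_eq_norm_sq_to_K, hw p (hS hp)]
  have hfib : ∀ h : (K × K) × (K × K) → ℝ, ∑ x ∈ Q.offDiag, h x
      = ∑ l ∈ L, ∑ x ∈ (Q.filter (· ∈ l)).offDiag, h x := by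
    intro h
    rw [← Finset.sum_fiberwise_of_maps_to (s := Q.offDiag) (t := L)
      (g := fun x => lineThrough x.1 x.2) (fun x hx => Finset.mem_image_of_mem _ hx)]
    refine Finset.sum_congr rfl fun l hl => Finset.sum_congr ?_ fun _ _ => rfl
    obtain ⟨y, hy, rfl⟩ := Finset.mem_image.1 hl
    have hy' := isLine_lineThrough (Finset.mem_offDiag.1 hy).2.2
    ext x
    simp only [Finset.mem_filter, Finset.mem_offDiag]
    refine ⟨fun ⟨⟨h1, h2, h3⟩, h4⟩ => ?_, fun ⟨h1, h2, h3⟩ => ?_⟩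
    · rw [← h4]
      exact ⟨⟨h1, left_mem_lineThrough _ _⟩, ⟨h2, right_mem_lineThrough _ _⟩, h3⟩
    · exact ⟨⟨h1.1, h2.1, h3⟩, hy'.eq_lineThrough h3 h1.2 h2.2⟩
  have hcount : ∀ S : Finset (K × K), ∑ _x ∈ S.offDiag, (1 : ℝ) = (S.card : ℝ) ^ 2 - S.card :=
    fun S => by
      rw [sum_offDiag_eq_sub S fun _ _ => 1]
      simp [sq]
  have hper : ∀ l ∈ L, 5 / 12 * ∑ _x ∈ (Q.filter (· ∈ l)).offDiag, (1 : ℝ) - 7 / 2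
      ≤ ∑ x ∈ (Q.filter (· ∈ l)).offDiag, g x.1 x.2 := by
    intro l hl
    obtain ⟨y, hy, rfl⟩ := Finset.mem_image.1 hl
    rw [Finset.mem_offDiag] at hy
    obtain ⟨W, hW, hWmem⟩ := hline _ hy.1 _ hy.2.1 hy.2.2
    rw [hcount, sum_offDiag_eq_sub, hg1 _ (Finset.filter_subset _ _)]
    have := card_sq_le_sum_inner_sq W hW (Q.filter (· ∈ lineThrough y.1 y.2)) w
      (fun p hp => hw p (Finset.mem_filter.1 hp).1)
      (fun p hp => hWmem p (Finset.mem_filter.1 hp).1 (Finset.mem_filter.1 hp).2)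
    nlinarith [sq_nonneg (((Q.filter (· ∈ lineThrough y.1 y.2)).card : ℝ) - 7 / 2)]
  have htot := Finset.sum_le_sum hper
  rw [Finset.sum_sub_distrib, ← Finset.mul_sum, ← hfib, ← hfib, hcount, sum_offDiag_eq_sub,
    hg1 _ subset_rfl, Finset.sum_const, nsmul_eq_mul] at htot
  have hup := Finset.sum_le_sum hsum
  rw [Finset.sum_const, nsmul_eq_mul] at hup
  have h0 : (0 : ℝ) ≤ Q.card := by positivity
  nlinarith

/-- The point `(x, y)` of the complex plane in homogeneous coordinates. -/
noncomputable def homogeneous (p : ℂ × ℂ) : EuclideanSpace ℂ (Fin 3) := !₂[p.1, p.2, 1]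

lemma homogeneous_ne_zero (p : ℂ × ℂ) : homogeneous p ≠ 0 := fun h => by
  simpa [homogeneous] using congrArg (fun x : EuclideanSpace ℂ (Fin 3) => x 2) h

lemma det_homogeneous (p q r : ℂ × ℂ) :
    (EuclideanSpace.basisFun (Fin 3) ℂ).toBasis.det ![homogeneous p, homogeneous q, homogeneous r]
      = collinearDet p q r := by
  rw [Module.Basis.det_apply, Matrix.det_fin_three]
  simp [Module.Basis.toMatrix_apply, homogeneous, collinearDet]
  ring

lemma homogeneous_mem_span {p q r : ℂ × ℂ} (hpq : p ≠ q) (h : collinearDet p q r = 0) :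
    homogeneous r ∈ Submodule.span ℂ {homogeneous p, homogeneous q} := by
  obtain ⟨t, h1, h2⟩ := exists_affine_combination hpq h
  refine Submodule.mem_span_pair.2 ⟨1 - t, t, ?_⟩
  ext i
  fin_cases i <;> simp [homogeneous, h1, h2]

/-- Beck's theorem over characteristic-zero fields. -/
theorem stmt8 :
    ∃ c c' : ℝ, 0 < c ∧ 0 < c' ∧
      ∀ (K : Type) [Field K] [CharZero K],
        ∀ P : Finset (K × K),
          (∃ l : Set (K × K), IsLine K l ∧
            c * (P.card : ℝ) ≤ ((P.filter (fun p => p ∈ l)).card : ℝ)) ∨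
          c' * (P.card : ℝ) ^ 2 ≤
            (Nat.card {l : Set (K × K) // IsLine K l ∧
              ∃ p ∈ P, ∃ q ∈ P, p ≠ q ∧ p ∈ l ∧ q ∈ l} : ℝ) := by
  refine ⟨1 / 2, 1 / 336, by norm_num, by norm_num, fun K _ _ P => ?_⟩
  obtain ⟨f, hinj, hf⟩ := exists_complex_copy P
  set v : K × K → EuclideanSpace ℂ (Fin 3) := fun p => homogeneous (f p) with hv
  obtain ⟨Q, hQP, ⟨C, -, hC⟩, hrest⟩ :=
    exists_subset_det_bound (EuclideanSpace.basisFun (Fin 3) ℂ).toBasis P v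
  obtain ⟨l, hl, hRl⟩ := exists_isLine_of_collinear (P \ Q) fun p hp q hq r hr =>
    (hf p (Finset.sdiff_subset hp) q (Finset.sdiff_subset hq) r (Finset.sdiff_subset hr)).1
      (by rw [← det_homogeneous]; exact hrest p hp q hq r hr)
  by_cases hR : 1 / 2 * (P.card : ℝ) ≤ ((P \ Q).card : ℝ)
  · refine Or.inl ⟨l, hl, hR.trans ?_⟩
    exact_mod_cast Finset.card_le_card fun p hp =>
      Finset.mem_filter.2 ⟨Finset.sdiff_subset hp, hRl p hp⟩
  right
  obtain ⟨B, hB, hiso⟩ := exists_almost_isotropic Q v (fun p _ => homogeneous_ne_zero _) C hC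
  have hB0 : ∀ p, ‖B (v p)‖ ≠ 0 := fun p =>
    norm_ne_zero_iff.2 fun h => homogeneous_ne_zero (f p) (hB (by rw [h, map_zero]))
  set w : K × K → EuclideanSpace ℂ (Fin 3) := fun p => ((‖B (v p)‖⁻¹ : ℝ) : ℂ) • B (v p) with hw
  have hw1 : ∀ p, ‖w p‖ = 1 := fun p => by
    rw [hw, norm_smul, Complex.norm_real, norm_inv, norm_norm, inv_mul_cancel₀ (hB0 p)]
  have hQ := card_sq_le_of_isotropic Q w (fun p _ => hw1 p) (fun p hp => by
      refine le_trans (le_of_eq (Finset.sum_congr rfl fun q _ => ?_)) (hiso (w p) (hw1 p))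
      rw [show w q = ((‖B (v q)‖⁻¹ : ℝ) : ℂ) • B (v q) from rfl, inner_smul_right, norm_mul,
        Complex.norm_real, norm_inv, norm_norm]
      ring) (fun p hp q hq hpq => by
      refine ⟨(Submodule.span ℂ {v p, v q}).map B,
        (Submodule.finrank_map_le _ _).trans ?_, fun r hr h => ?_⟩
      · have := finrank_span_finset_le_card (R := ℂ) ({v p, v q} : Finset _)
        rw [Finset.coe_pair] at this
        exact this.trans Finset.card_le_two
      · exact Submodule.smul_mem _ _ (Submodule.mem_map_of_mem (homogeneous_mem_span
          (fun h' => hpq (hinj p (hQP hp) q (hQP hq) h'))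
          ((hf p (hQP hp) q (hQP hq) r (hQP hr)).2 h))))
  have hmono : ((Q.offDiag.image fun x => lineThrough x.1 x.2).card : ℝ)
      ≤ ((P.offDiag.image fun x => lineThrough x.1 x.2).card : ℝ) := by
    exact_mod_cast Finset.card_le_card (Finset.image_subset_image (Finset.offDiag_mono hQP))
  rw [natCard_connecting_lines]
  have hcard : ((P \ Q).card : ℝ) + Q.card = P.card := by
    exact_mod_cast Finset.card_sdiff_add_card_eq_card hQP
  push Not at hR
  nlinarith
end

section
/- Sum-product estimate over characteristic-zero fields: there is an absolute constant c > 0 such that for every field K of characteristic zero and every finite nonempty subset A ⊆ K, max{|A + A|, |A · A|} ≥ c·|A|^{14/11}. -/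
open scoped Classical Pointwise

namespace SumProduct

open Finset

/-- If every point of `T` is at least as close to `z` as to the other points of `T`,
then `T` has at most nine points. -/
lemma card_le_nine_of_dist_le (T : Finset ℂ) (z : ℂ)
    (hT : ∀ w ∈ T, ∀ w' ∈ T, w ≠ w' → dist w z ≤ dist w w') : #T ≤ 9 := by
  have herase : #(T.erase z) ≤ 8 := by
    let octant : ℂ → Bool × Bool × Bool := fun w =>
      (decide (0 ≤ (w - z).re), decide (0 ≤ (w - z).im),
        decide ((w - z).re ^ 2 ≤ (w - z).im ^ 2))
    have hinj : Set.InjOn octant (T.erase z : Finset ℂ) := by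
      intro w hw w' hw' h
      by_contra hne
      rw [mem_coe, mem_erase] at hw hw'
      have h₁ := hT w hw.2 w' hw'.2 hne
      have h₂ := hT w' hw'.2 w hw.2 (Ne.symm hne)
      rw [Complex.dist_eq, Complex.dist_eq] at h₁ h₂
      have h₁' := pow_le_pow_left₀ (norm_nonneg _) h₁ 2
      have h₂' := pow_le_pow_left₀ (norm_nonneg _) h₂ 2
      rw [Complex.sq_norm, Complex.sq_norm, Complex.normSq_apply, Complex.normSq_apply] at h₁' h₂'
      have hpos : 0 < Complex.normSq (w - z) := Complex.normSq_pos.2 (sub_ne_zero.2 hw.1)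
      have hpos' : 0 < Complex.normSq (w' - z) := Complex.normSq_pos.2 (sub_ne_zero.2 hw'.1)
      rw [Complex.normSq_apply] at hpos hpos'
      simp only [octant, Prod.mk.injEq, decide_eq_decide] at h
      obtain ⟨hre, him, hsq⟩ := h
      have e₁ : (w - w').re = (w - z).re - (w' - z).re := by simp
      have e₂ : (w - w').im = (w - z).im - (w' - z).im := by simp
      have e₃ : (w' - w).re = (w' - z).re - (w - z).re := by simp
      have e₄ : (w' - w).im = (w' - z).im - (w - z).im := by simp
      rw [e₁, e₂] at h₁'
      rw [e₃, e₄] at h₂'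
      generalize (w - z).re = a at *
      generalize (w - z).im = b at *
      generalize (w' - z).re = c at *
      generalize (w' - z).im = d at *
      have hac : 0 ≤ a * c := by
        rcases le_total 0 a with ha | ha
        · exact mul_nonneg ha (hre.1 ha)
        · rcases le_total 0 c with hc | hc
          · exact mul_nonneg (hre.2 hc) hc
          · exact mul_nonneg_of_nonpos_of_nonpos ha hc
      have hbd : 0 ≤ b * d := by
        rcases le_total 0 b with hb | hb
        · exact mul_nonneg hb (him.1 hb)
        · rcases le_total 0 d with hd | hd
          · exact mul_nonneg (him.2 hd) hd
          · exact mul_nonneg_of_nonpos_of_nonpos hb hd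
      have hprod : 0 ≤ (a ^ 2 - b ^ 2) * (c ^ 2 - d ^ 2) := by
        by_cases hab : a ^ 2 ≤ b ^ 2
        · exact mul_nonneg_of_nonpos_of_nonpos (by linarith) (by linarith [hsq.1 hab])
        · have hcd : ¬ c ^ 2 ≤ d ^ 2 := fun hcd => hab (hsq.2 hcd)
          exact mul_nonneg (by linarith) (by linarith)
      have hangle : (a * a + b * b) * (c * c + d * d) ≤ 2 * (a * c + b * d) ^ 2 := by
        nlinarith [mul_nonneg hac hbd]
      have hw₁ : 2 * (a * c + b * d) ≤ c * c + d * d := by linarith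
      have hw₂ : 2 * (a * c + b * d) ≤ a * a + b * b := by linarith
      have hsmall : (2 * (a * c + b * d)) * (2 * (a * c + b * d)) ≤
          (a * a + b * b) * (c * c + d * d) :=
        mul_le_mul hw₂ hw₁ (by linarith) hpos.le
      nlinarith [mul_pos hpos hpos']
    calc #(T.erase z) = #((T.erase z).image octant) := (card_image_of_injOn hinj).symm
      _ ≤ Fintype.card (Bool × Bool × Bool) := card_le_univ _
      _ = 8 := by simp
  have := pred_card_le_card_erase (s := T) (a := z)
  omega

/-- The elements `a` of `A` such that `(a, m * a)` lies in `A × A`. -/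
noncomputable def onLine (A : Finset ℂ) (m : ℂ) : Finset ℂ := {a ∈ A | m * a ∈ A}

lemma mem_onLine {A : Finset ℂ} {m a : ℂ} : a ∈ onLine A m ↔ a ∈ A ∧ m * a ∈ A := by
  simp [onLine]

lemma card_onLine_le (A : Finset ℂ) (m : ℂ) : #(onLine A m) ≤ #A := card_filter_le _ _

/-- The elements of `A` are nonzero and pairwise at angle at most `π / 2`. -/
def IsAcute (A : Finset ℂ) : Prop :=
  (∀ a ∈ A, a ≠ 0) ∧ ∀ a ∈ A, ∀ b ∈ A, 0 ≤ a.re * b.re + a.im * b.im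

lemma IsAcute.norm_le_norm_add {A : Finset ℂ} (hA : IsAcute A) {a b : ℂ} (ha : a ∈ A)
    (hb : b ∈ A) : ‖b‖ ≤ ‖a + b‖ := by
  refine le_of_sq_le_sq ?_ (norm_nonneg _)
  rw [Complex.sq_norm, Complex.sq_norm, Complex.normSq_apply, Complex.normSq_apply,
    Complex.add_re, Complex.add_im]
  nlinarith [hA.2 a ha b hb, sq_nonneg a.re, sq_nonneg a.im]

lemma exists_nearest (L : Finset ℂ) (hL : 1 < #L) :
    ∃ f : ℂ → ℂ, ∀ m ∈ L, f m ∈ L ∧ f m ≠ m ∧ ∀ m' ∈ L, m ≠ m' → dist m (f m) ≤ dist m m' := by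
  have h : ∀ m, ∃ q, m ∈ L → q ∈ L ∧ q ≠ m ∧ ∀ m' ∈ L, m ≠ m' → dist m q ≤ dist m m' := by
    intro m
    by_cases hm : m ∈ L
    · have hne : (L.erase m).Nonempty := by
        rw [← card_pos, card_erase_of_mem hm]
        omega
      obtain ⟨q, hq, hmin⟩ := exists_min_image (L.erase m) (dist m) hne
      rw [mem_erase] at hq
      exact ⟨q, fun _ => ⟨hq.2, hq.1, fun m' hm' hne' =>
        hmin m' (mem_erase.2 ⟨hne'.symm, hm'⟩)⟩⟩
    · exact ⟨0, fun h => absurd h hm⟩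
  choose f hf using h
  exact ⟨f, hf⟩

lemma card_mul_sq_le_of_one_lt {A : Finset ℂ} (hA : IsAcute A) (L : Finset ℂ) (hL : 1 < #L)
    (t : ℕ) (ht : ∀ m ∈ L, t ≤ #(onLine A m)) : #L * t ^ 2 ≤ 9 * #(A + A) ^ 2 := by
  obtain ⟨f, hf⟩ := exists_nearest L hL
  let P : Finset (Σ _ : ℂ, ℂ × ℂ) := L.sigma fun m => onLine A m ×ˢ onLine A (f m)
  let g : (Σ _ : ℂ, ℂ × ℂ) → ℂ × ℂ := fun p => (p.2.1 + p.2.2, p.1 * p.2.1 + f p.1 * p.2.2)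
  have hP : #L * t ^ 2 ≤ #P := by
    rw [card_sigma, ← smul_eq_mul, ← sum_const]
    refine sum_le_sum fun m hm => ?_
    rw [card_product, sq]
    exact Nat.mul_le_mul (ht m hm) (ht _ (hf m hm).1)
  have hmem : ∀ p ∈ P, g p ∈ (A + A) ×ˢ (A + A) := by
    rintro ⟨m, a, b⟩ hp
    simp only [P, mem_sigma, mem_product, mem_onLine] at hp
    exact mem_product.2 ⟨add_mem_add hp.2.1.1 hp.2.2.1, add_mem_add hp.2.1.2 hp.2.2.2⟩
  have hfiber : ∀ q ∈ (A + A) ×ˢ (A + A), #{p ∈ P | g p = q} ≤ 9 := by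
    rintro ⟨x, y⟩ -
    have hinj : Set.InjOn (Sigma.fst : (Σ _ : ℂ, ℂ × ℂ) → ℂ)
        ({p ∈ P | g p = (x, y)} : Finset (Σ _ : ℂ, ℂ × ℂ)) := by
      rintro ⟨m, a, b⟩ hp ⟨m', a', b'⟩ hp' h
      simp only [coe_filter, Set.mem_ofPred_eq, P, mem_sigma, g, Prod.mk.injEq] at hp hp' h
      subst h
      obtain ⟨⟨hm, -⟩, h₁, h₂⟩ := hp
      obtain ⟨-, h₁', h₂'⟩ := hp'
      have hb : (f m - m) * (b - b') = 0 := by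
        linear_combination h₂ - h₂' - m * (h₁ - h₁')
      have hbb : b = b' := sub_eq_zero.1 <|
        (mul_eq_zero.1 hb).resolve_left (sub_ne_zero.2 (hf m hm).2.1)
      subst hbb
      have haa : a = a' := by linear_combination h₁ - h₁'
      rw [haa]
    rw [← card_image_of_injOn hinj]
    have hdist : ∀ m ∈ ({p ∈ P | g p = (x, y)} : Finset _).image Sigma.fst,
        m ∈ L ∧ dist m (y / x) ≤ dist m (f m) := by
      intro m hm
      rw [mem_image] at hm
      obtain ⟨⟨m, a, b⟩, hp, rfl⟩ := hm
      simp only [mem_filter, P, mem_sigma, mem_product, mem_onLine, g, Prod.mk.injEq] at hp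
      obtain ⟨⟨hm, ⟨ha, -⟩, hb, -⟩, rfl, rfl⟩ := hp
      refine ⟨hm, ?_⟩
      have hle := hA.norm_le_norm_add ha hb
      have hpos : 0 < ‖a + b‖ := (norm_pos_iff.2 (hA.1 b hb)).trans_le hle
      have hne : a + b ≠ 0 := norm_pos_iff.1 hpos
      have key : m - (m * a + f m * b) / (a + b) = (m - f m) * (b / (a + b)) := by
        field_simp
        ring
      dsimp only
      rw [Complex.dist_eq, Complex.dist_eq, key, norm_mul, norm_div]
      exact mul_le_of_le_one_right (norm_nonneg _) ((div_le_one hpos).2 hle)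
    refine card_le_nine_of_dist_le _ (y / x) fun w hw w' hw' hne => ?_
    exact (hdist w hw).2.trans ((hf w (hdist w hw).1).2.2 w' (hdist w' hw').1 hne)
  calc #L * t ^ 2 ≤ #P := hP
    _ ≤ 9 * #((A + A) ×ˢ (A + A)) := card_le_mul_card_image_of_maps_to hmem 9 hfiber
    _ = 9 * #(A + A) ^ 2 := by rw [card_product, sq]

lemma card_le_card_add_self (A : Finset ℂ) : #A ≤ #(A + A) := by
  rcases A.eq_empty_or_nonempty with rfl | hA
  · simp
  · exact card_le_card_add_right hA

/-- Solymosi's bound on the number of rich lines through the origin. -/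
lemma card_mul_sq_le {A : Finset ℂ} (hA : IsAcute A) (L : Finset ℂ)
    (t : ℕ) (ht : ∀ m ∈ L, t ≤ #(onLine A m)) : #L * t ^ 2 ≤ 9 * #(A + A) ^ 2 := by
  rcases L.eq_empty_or_nonempty with rfl | ⟨m, hm⟩
  · simp
  rcases le_or_gt #L 1 with hL | hL
  · have h : t ≤ #(A + A) := (ht m hm).trans ((card_onLine_le A m).trans (card_le_card_add_self A))
    exact Nat.mul_le_mul (by omega) (Nat.pow_le_pow_left h 2)
  · exact card_mul_sq_le_of_one_lt hA L hL t ht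

lemma mulEnergy_le_sum_sq {A : Finset ℂ} (hA : ∀ a ∈ A, a ≠ 0) :
    mulEnergy A A ≤ ∑ m ∈ A / A, #(onLine A m) ^ 2 := by
  rw [mulEnergy]
  rw [card_eq_sum_card_fiberwise (f := fun x : (ℂ × ℂ) × ℂ × ℂ => x.1.1 / x.1.2) (t := A / A)]
  · refine sum_le_sum fun m _ => ?_
    rw [sq, ← card_product]
    refine card_le_card_of_injOn (fun x => (x.1.2, x.2.1)) ?_ ?_
    · rintro ⟨⟨a, b⟩, c, d⟩ hx
      simp only [coe_filter, mem_filter, mem_product, Set.mem_ofPred_eq] at hx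
      obtain ⟨⟨⟨⟨ha, hb⟩, hc, hd⟩, h⟩, rfl⟩ := hx
      have hb0 := hA b hb
      have e₁ : a / b * b = a := div_mul_cancel₀ a hb0
      have e₂ : a / b * c = d := by
        field_simp
        linear_combination h
      simp only [coe_product, Set.mem_prod, mem_coe, mem_onLine, e₁, e₂]
      exact ⟨⟨hb, ha⟩, hc, hd⟩
    · rintro ⟨⟨a, b⟩, c, d⟩ hx ⟨⟨a', b'⟩, c', d'⟩ hx' h
      simp only [coe_filter, mem_filter, mem_product, Set.mem_ofPred_eq, Prod.mk.injEq] at hx hx' h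
      obtain ⟨⟨⟨⟨ha, hb⟩, hc, hd⟩, h₁⟩, h₂⟩ := hx
      obtain ⟨⟨⟨⟨ha', hb'⟩, hc', hd'⟩, h₁'⟩, h₂'⟩ := hx'
      obtain ⟨rfl, rfl⟩ := h
      have hb0 := hA b hb
      have haa : a = a' := by
        rw [← h₂'] at h₂
        exact (div_left_inj' hb0).1 h₂
      subst haa
      have hdd : d = d' := mul_left_cancel₀ hb0 (h₁.symm.trans h₁')
      rw [hdd]
  · rintro ⟨⟨a, b⟩, c, d⟩ hx
    simp only [coe_filter, mem_product, Set.mem_ofPred_eq] at hx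
    exact div_mem_div hx.1.1.1 hx.1.1.2

lemma sq_le_sum_two_mul (r n : ℕ) (h : r ≤ n) :
    r ^ 2 ≤ ∑ t ∈ range n, if t + 1 ≤ r then 2 * (t + 1) else 0 := by
  induction n generalizing r with
  | zero => simp_all
  | succ n ih =>
    rw [sum_range_succ]
    rcases h.lt_or_eq with h | rfl
    · exact (ih r (by omega)).trans (Nat.le_add_right _ _)
    · have := ih n le_rfl
      have hs : ∑ t ∈ range n, (if t + 1 ≤ n then 2 * (t + 1) else 0) ≤
          ∑ t ∈ range n, (if t + 1 ≤ n + 1 then 2 * (t + 1) else 0) := by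
        refine sum_le_sum fun t _ => ?_
        split_ifs <;> omega
      simp only [le_refl, if_true]
      nlinarith

lemma sum_sq_le {A : Finset ℂ} (hA : IsAcute A) (L : Finset ℂ) :
    ((∑ m ∈ L, #(onLine A m) ^ 2 : ℕ) : ℝ) ≤ 18 * (#(A + A) : ℝ) ^ 2 * (harmonic #A : ℝ) := by
  have h₁ : ∑ m ∈ L, #(onLine A m) ^ 2 ≤
      ∑ t ∈ range #A, #{m ∈ L | t + 1 ≤ #(onLine A m)} * (2 * (t + 1)) := by
    refine (sum_le_sum fun m _ => sq_le_sum_two_mul _ _ (card_onLine_le A m)).trans_eq ?_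
    rw [sum_comm]
    refine sum_congr rfl fun t _ => ?_
    rw [← sum_filter, sum_const, smul_eq_mul]
  refine (Nat.cast_le.2 h₁).trans ?_
  rw [harmonic]
  push_cast
  rw [mul_sum]
  refine sum_le_sum fun t _ => ?_
  have h₂ := card_mul_sq_le hA {m ∈ L | t + 1 ≤ #(onLine A m)} (t + 1)
    fun m hm => (mem_filter.1 hm).2
  have h₃ : (#{m ∈ L | t + 1 ≤ #(onLine A m)} : ℝ) * ((t : ℝ) + 1) ^ 2 ≤
      9 * (#(A + A) : ℝ) ^ 2 := by exact_mod_cast h₂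
  have ht : (0 : ℝ) < (t : ℝ) + 1 := by positivity
  rw [← div_eq_mul_inv, le_div_iff₀ ht]
  linarith

lemma card_pow_four_le {A : Finset ℂ} (hA : IsAcute A) :
    (#A : ℝ) ^ 4 ≤ 18 * (#(A + A) : ℝ) ^ 2 * #(A * A) * (1 + Real.log #A) := by
  have h₁ : #A ^ 2 * #A ^ 2 ≤ #(A * A) * ∑ m ∈ A / A, #(onLine A m) ^ 2 :=
    (le_card_mul_mul_mulEnergy A A).trans (Nat.mul_le_mul_left _ (mulEnergy_le_sum_sq hA.1))
  have h₂ : (#A : ℝ) ^ 2 * (#A : ℝ) ^ 2 ≤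
      #(A * A) * ((∑ m ∈ A / A, #(onLine A m) ^ 2 : ℕ) : ℝ) := by exact_mod_cast h₁
  calc (#A : ℝ) ^ 4 = (#A : ℝ) ^ 2 * (#A : ℝ) ^ 2 := by ring
    _ ≤ #(A * A) * ((∑ m ∈ A / A, #(onLine A m) ^ 2 : ℕ) : ℝ) := h₂
    _ ≤ #(A * A) * (18 * (#(A + A) : ℝ) ^ 2 * (1 + Real.log #A)) := by
        gcongr
        exact (sum_sq_le hA _).trans (by gcongr; exact harmonic_le_one_add_log _)
    _ = _ := by ring

lemma rpow_le_of_isAcute {A : Finset ℂ} (hA : IsAcute A) (hne : A.Nonempty) {M : ℝ}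
    (hadd : (#(A + A) : ℝ) ≤ M) (hmul : (#(A * A) : ℝ) ≤ M) :
    (#A : ℝ) ^ ((14 : ℝ) / 11) ≤ 5 * M := by
  have hn : (1 : ℝ) ≤ #A := by exact_mod_cast hne.card_pos
  have hn0 : (0 : ℝ) < #A := by linarith
  have hM : 0 ≤ M := (Nat.cast_nonneg _).trans hadd
  set n : ℝ := (#A : ℝ)
  have hlog : 1 + Real.log n ≤ 13 / 2 * n ^ ((2 : ℝ) / 11) := by
    have h₁ := Real.log_le_rpow_div hn0.le (show (0 : ℝ) < 2 / 11 by norm_num)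
    have h₂ : 1 ≤ n ^ ((2 : ℝ) / 11) := Real.one_le_rpow hn (by norm_num)
    linarith
  have hlog0 : 0 ≤ 1 + Real.log n := by linarith [Real.log_nonneg hn]
  have h₁ : n ^ 4 ≤ 117 * M ^ 3 * n ^ ((2 : ℝ) / 11) := calc
    n ^ 4 ≤ 18 * (#(A + A) : ℝ) ^ 2 * #(A * A) * (1 + Real.log n) := card_pow_four_le hA
    _ ≤ 18 * M ^ 2 * M * (13 / 2 * n ^ ((2 : ℝ) / 11)) := by gcongr
    _ = 117 * M ^ 3 * n ^ ((2 : ℝ) / 11) := by ring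
  have h₂ : n ^ 4 = (n ^ ((14 : ℝ) / 11)) ^ 3 * n ^ ((2 : ℝ) / 11) := by
    rw [← Real.rpow_natCast (n ^ ((14 : ℝ) / 11)), ← Real.rpow_mul hn0.le, ← Real.rpow_add hn0,
      ← Real.rpow_natCast n]
    norm_num
  rw [h₂] at h₁
  have h₃ : (n ^ ((14 : ℝ) / 11)) ^ 3 ≤ 117 * M ^ 3 :=
    le_of_mul_le_mul_right h₁ (Real.rpow_pos_of_pos hn0 _)
  refine le_of_pow_le_pow_left₀ three_ne_zero (by positivity) (h₃.trans ?_)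
  have := pow_nonneg hM 3
  rw [mul_pow]
  linarith

lemma exists_isAcute_subset (A : Finset ℂ) (hA : 1 < #A) :
    ∃ B ⊆ A, IsAcute B ∧ #A ≤ 8 * #B := by
  let quadrant : ℂ → Bool × Bool := fun w => (decide (0 ≤ w.re), decide (0 ≤ w.im))
  have hcard := pred_card_le_card_erase (s := A) (a := 0)
  obtain ⟨q, -, hq⟩ := exists_le_card_fiber_of_nsmul_le_card_of_maps_to (M := ℚ)
    (s := A.erase 0) (t := univ) (f := quadrant) (b := #(A.erase 0) / 4)
    (fun _ _ => mem_univ _) univ_nonempty (by simp; linarith)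
  refine ⟨{x ∈ A.erase 0 | quadrant x = q}, (filter_subset _ _).trans (erase_subset _ _),
    ⟨fun a ha => (mem_erase.1 (mem_filter.1 ha).1).1, fun a ha b hb => ?_⟩, ?_⟩
  · have h := (mem_filter.1 ha).2.trans (mem_filter.1 hb).2.symm
    simp only [quadrant, Prod.mk.injEq, decide_eq_decide] at h
    obtain ⟨hre, him⟩ := h
    refine add_nonneg ?_ ?_
    · by_cases h : 0 ≤ a.re
      · exact mul_nonneg h (hre.1 h)
      · exact mul_nonneg_of_nonpos_of_nonpos (le_of_not_ge h)
          (le_of_not_ge fun h' => h (hre.2 h'))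
    · by_cases h : 0 ≤ a.im
      · exact mul_nonneg h (him.1 h)
      · exact mul_nonneg_of_nonpos_of_nonpos (le_of_not_ge h)
          (le_of_not_ge fun h' => h (him.2 h'))
  · have h₁ : #(A.erase 0) ≤ 4 * #{x ∈ A.erase 0 | quadrant x = q} := by
      rw [div_le_iff₀ (by norm_num)] at hq
      have h₂ : (#(A.erase 0) : ℚ) ≤ 4 * #{x ∈ A.erase 0 | quadrant x = q} := by linarith
      exact_mod_cast h₂
    omega

/-- The sum-product estimate over the complex numbers. -/
theorem complex_sum_product (A : Finset ℂ) (hne : A.Nonempty) :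
    1 / 320 * (#A : ℝ) ^ ((14 : ℝ) / 11) ≤ (max #(A + A) #(A * A) : ℝ) := by
  rcases le_or_gt #A 1 with hA | hA
  · have h₁ : #A = 1 := le_antisymm hA hne.card_pos
    have h₂ : (1 : ℝ) ≤ #(A + A) := by exact_mod_cast (hne.add hne).card_pos
    refine le_trans ?_ (le_max_left _ _)
    rw [h₁, Nat.cast_one, Real.one_rpow]
    linarith
  · obtain ⟨B, hBA, hB, hcard⟩ := exists_isAcute_subset A hA
    have hBne : B.Nonempty := card_pos.1 (by omega)
    set M : ℝ := max (#(A + A) : ℝ) (#(A * A) : ℝ)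
    have hadd : (#(B + B) : ℝ) ≤ M :=
      (Nat.cast_le.2 (card_le_card (add_subset_add hBA hBA))).trans (le_max_left _ _)
    have hmul : (#(B * B) : ℝ) ≤ M :=
      (Nat.cast_le.2 (card_le_card (mul_subset_mul hBA hBA))).trans (le_max_right _ _)
    have h8 : (8 : ℝ) ^ ((14 : ℝ) / 11) ≤ 64 := calc
      (8 : ℝ) ^ ((14 : ℝ) / 11) ≤ 8 ^ (2 : ℝ) :=
        Real.rpow_le_rpow_of_exponent_le (by norm_num) (by norm_num)
      _ = 64 := by norm_num
    have h : (#A : ℝ) ^ ((14 : ℝ) / 11) ≤ 320 * M := calc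
      (#A : ℝ) ^ ((14 : ℝ) / 11) ≤ (8 * #B : ℝ) ^ ((14 : ℝ) / 11) := by
        gcongr
        exact_mod_cast hcard
      _ = 8 ^ ((14 : ℝ) / 11) * (#B : ℝ) ^ ((14 : ℝ) / 11) :=
        Real.mul_rpow (by norm_num) (Nat.cast_nonneg _)
      _ ≤ 64 * (5 * M) := by
        gcongr
        exact rpow_le_of_isAcute hB hBne hadd hmul
      _ = 320 * M := by ring
    linarith

open Cardinal in
/-- A countable field of characteristic zero embeds into `ℂ`. -/
lemma nonempty_ringHom_complex (F : Type) [Field F] [CharZero F] (hF : #F ≤ ℵ₀) :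
    Nonempty (F →+* ℂ) := by
  let R := MvPolynomial ℝ F
  let E := AlgebraicClosure (FractionRing R)
  have hR : #R = 𝔠 := by
    rw [MvPolynomial.cardinalMk_eq_max, mk_real, max_eq_right (hF.trans aleph0_le_continuum),
      max_eq_left aleph0_le_continuum]
  have hE : #E = 𝔠 := by
    refine le_antisymm ?_ ?_
    · refine (Algebra.IsAlgebraic.cardinalMk_le_max (FractionRing R) E).trans ?_
      rw [mk_fractionRing, hR, max_eq_left aleph0_le_continuum]
    · rw [← hR, ← mk_fractionRing R]
      exact mk_le_of_injective (algebraMap (FractionRing R) E).injective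
  let i : F →+* E := (algebraMap (FractionRing R) E).comp
    ((algebraMap R (FractionRing R)).comp MvPolynomial.C)
  have : CharZero E := charZero_of_injective_ringHom i.injective
  obtain ⟨e⟩ := IsAlgClosed.ringEquiv_of_equiv_of_charZero (K := E) (L := ℂ)
    (by rw [hE]; exact aleph0_lt_continuum)
    (Cardinal.eq.1 (hE.trans mk_complex.symm))
  exact ⟨e.toRingHom.comp i⟩

end SumProduct

open SumProduct in
/-- Sum-product estimate over characteristic-zero fields. -/
theorem stmt9 :
    ∃ c : ℝ, 0 < c ∧
      ∀ (K : Type) [Field K] [CharZero K],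
        ∀ A : Finset K, A.Nonempty →
          c * (A.card : ℝ) ^ ((14 : ℝ) / 11) ≤
            (max (A + A).card (A * A).card : ℝ) := by
  refine ⟨1 / 320, by norm_num, fun K _ _ A hA => ?_⟩
  let F : Subfield K := Subfield.closure (A : Set K)
  have hF : Cardinal.mk F ≤ Cardinal.aleph0 :=
    (Subfield.cardinalMk_closure_le_max _).trans
      (max_le (Cardinal.mk_le_aleph0_iff.2 A.countable_toSet.to_subtype) le_rfl)
  obtain ⟨φ⟩ := nonempty_ringHom_complex F hF
  obtain ⟨B, hB⟩ : ∃ B : Finset F, A = B.image F.subtype := by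
    refine ⟨A.preimage F.subtype F.subtype.injective.injOn, ?_⟩
    rw [Finset.image_preimage, Finset.filter_true_of_mem]
    exact fun a ha => ⟨⟨a, Subfield.subset_closure ha⟩, rfl⟩
  have hcard : B.card = A.card := by
    rw [hB, Finset.card_image_of_injective _ F.subtype.injective]
  have hadd : (B + B).card = (A + A).card := by
    rw [hB, ← Finset.image_add, Finset.card_image_of_injective _ F.subtype.injective]
  have hmul : (B * B).card = (A * A).card := by
    rw [hB, ← Finset.image_mul, Finset.card_image_of_injective _ F.subtype.injective]
  have hBne : B.Nonempty := Finset.card_pos.1 (hcard ▸ hA.card_pos)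
  have h := complex_sum_product (B.image φ) (hBne.image φ)
  rwa [← Finset.image_add, ← Finset.image_mul, Finset.card_image_of_injective _ φ.injective,
    Finset.card_image_of_injective _ φ.injective, Finset.card_image_of_injective _ φ.injective,
    hcard, hadd, hmul] at h
end
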